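/- arXiv:1104.0237 — 10 statements merged into one kernel-verified Lean document; each statement's English description precedes it below -/
import Mathlib

section
/- Let (X, Σ, ν) be a probability space, T : X → X a measure-preserving transformation, and f ∈ L¹(X, ν). Then: (1) there exists a function f̂ ∈ L¹(X, ν) such that the ergodic averages A_k(f,T,x) = (1/k)·Σ_{i=0}^{k-1} f(Tⁱx) converge to f̂(x) for ν-almost every x ∈ X as k → ∞; (2) f̂ is T-invariant, i.e. f̂(Tx) = f̂(x) for ν-almost every x; and (3) ∫_X f dν = ∫_X f̂ dν. -/
open MeasureTheory Filter Topology

/-- `birkhoffMax T g n x` is the maximum of the Birkhoff sums `birkhoffSum T g k x` over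
`1 ≤ k ≤ n + 1`, given by its recursion along the orbit of `x`. -/
noncomputable def birkhoffMax {X : Type*} (T : X → X) (g : X → ℝ) : ℕ → X → ℝ
  | 0, x => g x
  | n + 1, x => g x + max 0 (birkhoffMax T g n (T x))

section BirkhoffMax

variable {X : Type*} {T : X → X} {g : X → ℝ}

theorem birkhoffMax_le_succ (n : ℕ) (x : X) :
    birkhoffMax T g n x ≤ birkhoffMax T g (n + 1) x := by
  induction n generalizing x with
  | zero => simp [birkhoffMax]
  | succ n ih =>
    rw [birkhoffMax, birkhoffMax]
    gcongr
    exact ih _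

theorem monotone_birkhoffMax (x : X) : Monotone fun n => birkhoffMax T g n x :=
  monotone_nat_of_le_succ fun n => birkhoffMax_le_succ n x

theorem le_birkhoffMax (n : ℕ) (x : X) : g x ≤ birkhoffMax T g n x :=
  monotone_birkhoffMax x (Nat.zero_le n)

theorem birkhoffSum_le_birkhoffMax (n : ℕ) (x : X) :
    birkhoffSum T g (n + 1) x ≤ birkhoffMax T g n x := by
  induction n generalizing x with
  | zero => simp [birkhoffMax]
  | succ n ih =>
    rw [birkhoffSum_succ', birkhoffMax]
    gcongr
    exact (ih _).trans (le_max_right _ _)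

theorem bddAbove_birkhoffMax_map_iff (x : X) :
    BddAbove (Set.range fun n => birkhoffMax T g n (T x)) ↔
      BddAbove (Set.range fun n => birkhoffMax T g n x) := by
  constructor
  · rintro ⟨C, hC⟩
    refine ⟨g x + max 0 C, ?_⟩
    rintro _ ⟨n, rfl⟩
    refine (birkhoffMax_le_succ n x).trans ?_
    change g x + max 0 (birkhoffMax T g n (T x)) ≤ _
    gcongr
    exact hC ⟨n, rfl⟩
  · rintro ⟨C, hC⟩
    refine ⟨C - g x, ?_⟩
    rintro _ ⟨n, rfl⟩
    have h : g x + max 0 (birkhoffMax T g n (T x)) ≤ C := hC ⟨n + 1, rfl⟩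
    have := le_max_right 0 (birkhoffMax T g n (T x))
    dsimp only
    linarith

variable [MeasurableSpace X]

theorem measurable_birkhoffMax (hT : Measurable T) (hg : Measurable g) (n : ℕ) :
    Measurable (birkhoffMax T g n) := by
  induction n with
  | zero => exact hg
  | succ n ih => exact hg.add (measurable_const.max (ih.comp hT))

theorem integrable_birkhoffMax {μ : Measure X} (hT : MeasurePreserving T μ μ)
    (hg : Integrable g μ) (n : ℕ) : Integrable (birkhoffMax T g n) μ := by
  induction n with
  | zero => exact hg
  | succ n ih => exact hg.add ((integrable_zero _ _ _).sup (hT.integrable_comp_of_integrable ih))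

/-- The integral of `g` is nonnegative if the maximal Birkhoff sums diverge almost
everywhere. -/
theorem integral_nonneg_of_tendsto_birkhoffMax {μ : Measure X} (hT : MeasurePreserving T μ μ)
    (hg : Integrable g μ)
    (h : ∀ᵐ x ∂μ, Tendsto (fun n => birkhoffMax T g n (T x)) atTop atTop) :
    0 ≤ ∫ x, g x ∂μ := by
  have hint := integrable_birkhoffMax hT hg
  have hintT (n : ℕ) : Integrable (fun x => birkhoffMax T g n (T x)) μ :=
    hT.integrable_comp_of_integrable (hint n)
  have hlim : Tendsto (fun n => ∫ x, (birkhoffMax T g (n + 1) x - birkhoffMax T g n (T x)) ∂μ)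
      atTop (𝓝 (∫ x, g x ∂μ)) := by
    refine tendsto_integral_of_dominated_convergence (fun x => |g x| + |g (T x)|)
      (fun n => ((hint (n + 1)).sub (hintT n)).aestronglyMeasurable)
      (hg.abs.add (hT.integrable_comp_of_integrable hg).abs) (fun n => ?_) ?_
    · refine ae_of_all _ fun x => ?_
      have h₁ := le_birkhoffMax (T := T) (g := g) n (T x)
      rw [birkhoffMax, Real.norm_eq_abs]
      rcases max_cases 0 (birkhoffMax T g n (T x)) with ⟨h₂, h₃⟩ | ⟨h₂, h₃⟩ <;> rw [h₂]
      · rw [add_zero, sub_eq_add_neg]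
        refine (abs_add_le _ _).trans ?_
        rw [abs_neg, abs_of_nonpos h₃, abs_of_nonpos (h₁.trans h₃)]
        linarith
      · rw [add_sub_cancel_right]
        exact le_add_of_nonneg_right (abs_nonneg _)
    · filter_upwards [h] with x hx
      refine tendsto_const_nhds.congr' ?_
      filter_upwards [hx.eventually_ge_atTop 0] with n hn
      rw [birkhoffMax, max_eq_right hn, add_sub_cancel_right]
  refine ge_of_tendsto' hlim fun n => ?_
  have hcomp : ∫ x, birkhoffMax T g n (T x) ∂μ = ∫ x, birkhoffMax T g n x ∂μ := by
    have hm : AEStronglyMeasurable (birkhoffMax T g n) (μ.map T) := by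
      rw [hT.map_eq]
      exact (hint n).aestronglyMeasurable
    rw [← integral_map hT.aemeasurable hm, hT.map_eq]
  rw [integral_sub (hint _) (hintT n), hcomp, sub_nonneg]
  exact integral_mono (hint _) (hint _) fun x => birkhoffMax_le_succ n x

/-- If `g` has negative integral over every invariant set of positive measure, then its Birkhoff
sums are almost everywhere bounded above. -/
theorem ae_bddAbove_birkhoffMax {μ : Measure X} (hT : MeasurePreserving T μ μ)
    (hgm : Measurable g) (hg : Integrable g μ)
    (hneg : ∀ s, MeasurableSet[MeasurableSpace.invariants T] s → μ s ≠ 0 →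
      ∫ x in s, g x ∂μ < 0) :
    ∀ᵐ x ∂μ, BddAbove (Set.range fun n => birkhoffMax T g n x) := by
  set A : Set X := {x | ¬ BddAbove (Set.range fun n => birkhoffMax T g n x)}
  have hA : MeasurableSet A :=
    (measurableSet_bddAbove_range fun n => measurable_birkhoffMax hT.measurable hgm n).compl
  have hTA : T ⁻¹' A = A := by
    ext x
    exact not_congr (bddAbove_birkhoffMax_map_iff x)
  change μ A = 0
  by_contra hμA
  have hTr : MeasurePreserving T (μ.restrict A) (μ.restrict A) := by
    simpa only [hTA] using hT.restrict_preimage hA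
  refine (hneg A ⟨hA, hTA⟩ hμA).not_ge
    (integral_nonneg_of_tendsto_birkhoffMax hTr hg.restrict ?_)
  filter_upwards [ae_restrict_mem hA] with x hx
  rw [← hTA] at hx
  exact tendsto_atTop_atTop_of_monotone (monotone_birkhoffMax _) fun b =>
    (not_bddAbove_iff.1 hx b).elim fun _ ⟨⟨n, hn⟩, hb⟩ => ⟨n, hb.le.trans_eq hn.symm⟩

end BirkhoffMax

section CondExp

variable {X : Type*} [MeasurableSpace X] {ν : Measure X} [IsProbabilityMeasure ν] {T : X → X}
  {f : X → ℝ}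

theorem condExp_invariants_comp_eq (ν : Measure X) (T : X → X) (f : X → ℝ) :
    ν[f | MeasurableSpace.invariants T] ∘ T = ν[f | MeasurableSpace.invariants T] :=
  MeasurableSpace.comp_eq_of_measurable_invariants stronglyMeasurable_condExp.measurable

/-- Birkhoff averages are asymptotically at most the conditional expectation with respect to the
invariant σ-algebra. -/
theorem ae_eventually_birkhoffAverage_le (hT : MeasurePreserving T ν ν) (hfm : Measurable f)
    (hf : Integrable f ν) {ε : ℝ} (hε : 0 < ε) :
    ∀ᵐ x ∂ν, ∀ᶠ n in atTop,
      birkhoffAverage ℝ T f n x ≤ (ν[f | MeasurableSpace.invariants T]) x + ε := by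
  have hle := MeasurableSpace.invariants_le T
  set E : X → ℝ := ν[f | MeasurableSpace.invariants T]
  have hEint : Integrable E ν := integrable_condExp
  have hEinv : E ∘ T = E := condExp_invariants_comp_eq ν T f
  have hEm : Measurable E := (stronglyMeasurable_condExp.mono hle).measurable
  set c : X → ℝ := fun x => E x + ε / 2 with hc
  have hcint : Integrable c ν := hEint.add (integrable_const _)
  have hcinv : c ∘ T = c := by
    funext x
    exact congrArg (· + ε / 2) (congrFun hEinv x)
  have key := ae_bddAbove_birkhoffMax (g := f - c) hT
    (hfm.sub (hEm.add_const _)) (hf.sub hcint) (fun s hs hs0 => by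
      have hpos : 0 < ν.real s := ENNReal.toReal_pos hs0 (measure_ne_top _ _)
      have h₁ : ∫ x in s, E x ∂ν = ∫ x in s, f x ∂ν := setIntegral_condExp hle hf hs
      have h₂ : ∫ x in s, c x ∂ν = ∫ x in s, f x ∂ν + ν.real s * (ε / 2) := by
        rw [hc, integral_add hEint.restrict (integrable_const _), h₁]
        simp
      simp only [Pi.sub_apply]
      rw [integral_sub hf.restrict hcint.restrict, h₂]
      have := mul_pos hpos (half_pos hε)
      linarith)
  filter_upwards [key] with x ⟨C, hC⟩
  filter_upwards [(tendsto_const_div_atTop_nhds_zero_nat C).eventually_le_const (half_pos hε),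
    eventually_gt_atTop 0] with n hn hn0
  obtain ⟨m, rfl⟩ := Nat.exists_eq_succ_of_ne_zero hn0.ne'
  have hsum : birkhoffSum T (f - c) (m + 1) x ≤ C :=
    (birkhoffSum_le_birkhoffMax m x).trans (hC ⟨m, rfl⟩)
  have hn0' : (0 : ℝ) < (m + 1 : ℕ) := by exact_mod_cast hn0
  rw [birkhoffSum_sub, birkhoffSum_of_comp_eq hcinv] at hsum
  simp only [Pi.smul_apply, nsmul_eq_mul] at hsum
  rw [Nat.succ_eq_add_one, div_le_iff₀ hn0'] at hn
  rw [birkhoffAverage, smul_eq_mul, inv_mul_le_iff₀ hn0']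
  have : c x = E x + ε / 2 := rfl
  rw [this] at hsum
  linarith

/-- Pointwise ergodic theorem for measurable observables. -/
theorem ae_tendsto_birkhoffAverage_of_measurable (hT : MeasurePreserving T ν ν)
    (hfm : Measurable f) (hf : Integrable f ν) :
    ∀ᵐ x ∂ν, Tendsto (fun n => birkhoffAverage ℝ T f n x) atTop
      (𝓝 ((ν[f | MeasurableSpace.invariants T]) x)) := by
  have hup : ∀ᵐ x ∂ν, ∀ m : ℕ, ∀ᶠ n in atTop, birkhoffAverage ℝ T f n x ≤
      (ν[f | MeasurableSpace.invariants T]) x + 1 / ((m : ℝ) + 1) :=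
    ae_all_iff.2 fun m => ae_eventually_birkhoffAverage_le hT hfm hf Nat.one_div_pos_of_nat
  have hlow : ∀ᵐ x ∂ν, ∀ m : ℕ, ∀ᶠ n in atTop, birkhoffAverage ℝ T (-f) n x ≤
      (ν[-f | MeasurableSpace.invariants T]) x + 1 / ((m : ℝ) + 1) :=
    ae_all_iff.2 fun m => ae_eventually_birkhoffAverage_le hT hfm.neg hf.neg
      Nat.one_div_pos_of_nat
  filter_upwards [hup, hlow, condExp_neg f (MeasurableSpace.invariants T)] with x hx₁ hx₂ hx₃
  rw [Metric.tendsto_nhds]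
  intro ε hε
  obtain ⟨m, hm⟩ := exists_nat_one_div_lt hε
  filter_upwards [hx₁ m, hx₂ m] with n h₁ h₂
  simp only [hx₃, birkhoffAverage_neg, Pi.neg_apply] at h₂
  rw [Real.dist_eq, abs_lt]
  constructor <;> linarith

/-- Pointwise ergodic theorem: Birkhoff averages converge almost everywhere to the conditional
expectation with respect to the invariant σ-algebra. -/
theorem ae_tendsto_birkhoffAverage (hT : MeasurePreserving T ν ν) (hf : Integrable f ν) :
    ∀ᵐ x ∂ν, Tendsto (fun n => birkhoffAverage ℝ T f n x) atTop
      (𝓝 ((ν[f | MeasurableSpace.invariants T]) x)) := by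
  have hae : f =ᵐ[ν] hf.1.mk f := hf.1.ae_eq_mk
  filter_upwards [ae_tendsto_birkhoffAverage_of_measurable hT
      hf.1.stronglyMeasurable_mk.measurable (hf.congr hae),
    condExp_congr_ae (m := MeasurableSpace.invariants T) hae,
    ae_all_iff.2 (hT.quasiMeasurePreserving.birkhoffAverage_ae_eq_of_ae_eq ℝ hae)]
    with x h₁ h₂ h₃
  simpa only [h₂, h₃] using h₁

end CondExp

/-- **Birkhoff Ergodic Theorem.** For a probability space `(X, ν)`, a measure-preserving
transformation `T : X → X`, and an integrable function `f`, the ergodic averages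
`A_k(f,T,x) = (1/k)·∑_{i<k} f(Tⁱx)` converge ν-a.e. to an integrable, a.e. `T`-invariant
function `f̂` with the same integral as `f`. -/
theorem birkhoff_ergodic_theorem
    {X : Type*} [MeasurableSpace X] (ν : Measure X) [IsProbabilityMeasure ν]
    (T : X → X) (hT : MeasurePreserving T ν ν)
    (f : X → ℝ) (hf : Integrable f ν) :
    ∃ fhat : X → ℝ, Integrable fhat ν ∧
      (∀ᵐ x ∂ν, Tendsto (fun k : ℕ => (1 / (k : ℝ)) * ∑ i ∈ Finset.range k, f (T^[i] x))
        atTop (𝓝 (fhat x))) ∧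
      (∀ᵐ x ∂ν, fhat (T x) = fhat x) ∧
      ∫ x, f x ∂ν = ∫ x, fhat x ∂ν := by
  refine ⟨ν[f | MeasurableSpace.invariants T], integrable_condExp, ?_,
    ae_of_all _ (congrFun (condExp_invariants_comp_eq ν T f)),
    (integral_condExp (MeasurableSpace.invariants_le T)).symm⟩
  simpa only [birkhoffAverage, birkhoffSum, smul_eq_mul, one_div] using
    ae_tendsto_birkhoffAverage hT hf
end

section
/- Let Y be a finite set of cardinality M ≥ 1 and let T : Y → Y be a transitive permutation (a single cycle of length M, i.e. some (equivalently, every) point of Y has T-orbit equal to all of Y). Let F : Y → ℝ and set Av(F) = (1/M)·Σ_{y ∈ Y} F(y) and Av(|F|) = (1/M)·Σ_{y ∈ Y} |F(y)|. Then for every K ≥ 1 and every x ∈ Y, |(1/K)·Σ_{i=0}^{K-1} F(Tⁱx) − Av(F)| ≤ (2M/K)·Av(|F|). -/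
open Filter

theorem injOn_iterate_range_minimalPeriod {Y : Type*} (T : Y → Y) (x : Y) :
    Set.InjOn (fun i => T^[i] x) (Finset.range (Function.minimalPeriod T x)) := by
  intro i hi j hj hij
  exact (Function.iterate_eq_iterate_iff_of_lt_minimalPeriod
    (Finset.mem_range.1 hi) (Finset.mem_range.1 hj)).1 hij

section Cycle

variable {Y : Type*} [Fintype Y] {T : Y → Y}

/-- If one forward orbit of an injective self-map of a finite type is everything, then so is
every forward orbit. -/
theorem exists_iterate_eq_of_transitive (hT : Function.Injective T)
    (htrans : ∃ x : Y, ∀ y : Y, ∃ i : ℕ, T^[i] x = y) (x y : Y) : ∃ i : ℕ, T^[i] x = y := by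
  obtain ⟨x₀, h₀⟩ := htrans
  obtain ⟨a, rfl⟩ := h₀ x
  obtain ⟨i, rfl⟩ := h₀ y
  have hp : 0 < Function.minimalPeriod T x₀ :=
    Function.minimalPeriod_pos_of_mem_periodicPts (hT.mem_periodicPts x₀)
  have hle : a ≤ a * Function.minimalPeriod T x₀ := Nat.le_mul_of_pos_right a hp
  refine ⟨i + (a * Function.minimalPeriod T x₀ - a), ?_⟩
  rw [← Function.iterate_add_apply, add_assoc, Nat.sub_add_cancel hle,
    Function.iterate_add_apply]
  exact congrArg _ ((Function.isPeriodicPt_minimalPeriod T x₀).const_mul a)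

theorem image_iterate_range_minimalPeriod [DecidableEq Y] (hT : Function.Injective T) {x : Y}
    (hx : ∀ y : Y, ∃ i : ℕ, T^[i] x = y) :
    (Finset.range (Function.minimalPeriod T x)).image (fun i => T^[i] x) = Finset.univ := by
  refine Finset.eq_univ_of_forall fun y => ?_
  obtain ⟨i, rfl⟩ := hx y
  have hp : 0 < Function.minimalPeriod T x :=
    Function.minimalPeriod_pos_of_mem_periodicPts (hT.mem_periodicPts x)
  exact Finset.mem_image.2 ⟨i % Function.minimalPeriod T x,
    Finset.mem_range.2 (Nat.mod_lt _ hp), Function.iterate_mod_minimalPeriod_eq⟩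

theorem minimalPeriod_eq_card (hT : Function.Injective T) {x : Y}
    (hx : ∀ y : Y, ∃ i : ℕ, T^[i] x = y) : Function.minimalPeriod T x = Fintype.card Y := by
  classical
  rw [← Finset.card_univ, ← image_iterate_range_minimalPeriod hT hx,
    Finset.card_image_of_injOn (injOn_iterate_range_minimalPeriod T x), Finset.card_range]

theorem sum_range_card_iterate (hT : Function.Injective T) {x : Y}
    (hx : ∀ y : Y, ∃ i : ℕ, T^[i] x = y) (F : Y → ℝ) :
    ∑ i ∈ Finset.range (Fintype.card Y), F (T^[i] x) = ∑ y, F y := by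
  classical
  rw [← image_iterate_range_minimalPeriod hT hx,
    Finset.sum_image (injOn_iterate_range_minimalPeriod T x), minimalPeriod_eq_card hT hx]

end Cycle

theorem sum_range_mul_add_of_periodic {f : ℕ → ℝ} {M : ℕ} (hf : Function.Periodic f M)
    (q r : ℕ) :
    ∑ i ∈ Finset.range (q * M + r), f i =
      q * ∑ i ∈ Finset.range M, f i + ∑ i ∈ Finset.range r, f i := by
  induction q with
  | zero => simp
  | succ q ih =>
    have hshift : ∀ i, f (M + i) = f i := fun i => by rw [add_comm]; exact hf i
    rw [show (q + 1) * M + r = M + (q * M + r) by ring, Finset.sum_range_add]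
    simp only [hshift, ih]
    push_cast
    ring

/-- For a transitive permutation `T` (a single cycle of length `M = |Y|`) of a finite set
`Y` and any `F : Y → ℝ`, the ergodic average of length `K ≥ 1` starting at any `x` differs
from the full average `Av(F) = (1/M)·∑ F` by at most `(2M/K)·Av(|F|)`. -/
theorem transitive_average_bound
    {Y : Type*} [Fintype Y] (T : Y → Y) (hT : Function.Bijective T)
    (M : ℕ) (hM : M = Fintype.card Y) (hM1 : 1 ≤ M)
    (htrans : ∃ x : Y, ∀ y : Y, ∃ i : ℕ, T^[i] x = y)
    (F : Y → ℝ) :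
    ∀ K : ℕ, 1 ≤ K → ∀ x : Y,
      |(1 / (K : ℝ)) * ∑ i ∈ Finset.range K, F (T^[i] x) -
          (1 / (M : ℝ)) * ∑ y : Y, F y|
        ≤ (2 * (M : ℝ) / (K : ℝ)) * ((1 / (M : ℝ)) * ∑ y : Y, |F y|) := by
  intro K hK x
  have hx := exists_iterate_eq_of_transitive hT.injective htrans x
  have hsum : ∀ G : Y → ℝ, ∑ i ∈ Finset.range M, G (T^[i] x) = ∑ y, G y := fun G => by
    rw [hM]
    exact sum_range_card_iterate hT.injective hx G
  have hper : Function.Periodic (fun i => F (T^[i] x)) M := fun i => by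
    have hMx : T^[M] x = x := by
      rw [hM, ← minimalPeriod_eq_card hT.injective hx]
      exact Function.isPeriodicPt_minimalPeriod T x
    simp only [Function.iterate_add_apply, hMx]
  have hr : K % M < M := Nat.mod_lt _ hM1
  have hsplit := sum_range_mul_add_of_periodic hper (K / M) (K % M)
  rw [Nat.div_add_mod' K M, hsum F] at hsplit
  have hKcast : (K : ℝ) = (K / M : ℕ) * M + (K % M : ℕ) := by
    exact_mod_cast (Nat.div_add_mod' K M).symm
  have hK0 : (0 : ℝ) < K := by exact_mod_cast hK
  have hM0 : (0 : ℝ) < M := by exact_mod_cast hM1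
  have hrem : |∑ i ∈ Finset.range (K % M), F (T^[i] x)| ≤ ∑ y, |F y| :=
    calc |∑ i ∈ Finset.range (K % M), F (T^[i] x)|
        ≤ ∑ i ∈ Finset.range (K % M), |F (T^[i] x)| := Finset.abs_sum_le_sum_abs _ _
      _ ≤ ∑ i ∈ Finset.range M, |F (T^[i] x)| :=
          Finset.sum_le_sum_of_subset_of_nonneg (Finset.range_mono hr.le)
            fun _ _ _ => abs_nonneg _
      _ = ∑ y, |F y| := hsum fun y => |F y|
  have hfrac : |((K % M : ℕ) / M : ℝ) * ∑ y, F y| ≤ ∑ y, |F y| := by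
    have hle : ((K % M : ℕ) / M : ℝ) ≤ 1 := (div_le_one hM0).2 (by exact_mod_cast hr.le)
    rw [abs_mul, abs_of_nonneg (by positivity)]
    exact (mul_le_of_le_one_left (abs_nonneg _) hle).trans (Finset.abs_sum_le_sum_abs _ _)
  have hdiff : (1 / (K : ℝ)) * ∑ i ∈ Finset.range K, F (T^[i] x) - (1 / (M : ℝ)) * ∑ y, F y =
      (1 / (K : ℝ)) * (∑ i ∈ Finset.range (K % M), F (T^[i] x) -
        ((K % M : ℕ) / M : ℝ) * ∑ y, F y) := by
    rw [hsplit]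
    field_simp
    rw [hKcast]
    ring
  have hbound : (2 * (M : ℝ) / K) * ((1 / (M : ℝ)) * ∑ y, |F y|) =
      (1 / (K : ℝ)) * (∑ y, |F y| + ∑ y, |F y|) := by
    field_simp
    ring
  rw [hdiff, hbound, abs_mul, abs_of_pos (one_div_pos.2 hK0)]
  gcongr
  exact (abs_sub _ _).trans (add_le_add hrem hfrac)
end

section
/- Let Y_n be a sequence of finite nonempty sets with |Y_n| = M_n → ∞, let T_n : Y_n → Y_n be permutations, and let F_n : Y_n → ℝ be a uniformly integrable sequence. Let K_n and L_n be sequences of positive natural numbers such that K_n/M_n is bounded, liminf_{n→∞} K_n/M_n > 0, and lim_{n→∞} K_n/L_n = 1. Then for every ε > 0, lim_{n→∞} (1/M_n)·|{y ∈ Y_n : |A_{K_n}(F_n,T_n,y) − A_{L_n}(F_n,T_n,y)| ≥ ε}| = 0. -/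
open Filter Topology

/-- The ergodic average `A_K(F,T,y) = (1/K)·∑_{i<K} F(Tⁱy)`. -/
noncomputable def ergAvg {Y : Type*} (T : Y → Y) (F : Y → ℝ) (K : ℕ) (y : Y) : ℝ :=
  (1 / (K : ℝ)) * ∑ i ∈ Finset.range K, F (T^[i] y)

/-- Composition with iterates of a permutation preserves the `ℓ¹` norm, so a sum of translates
indexed by `s` has `ℓ¹` norm at most `#s` times that of `F`. -/
lemma sum_abs_sum_iterate_le {Y : Type*} [Fintype Y] {T : Y → Y} (hT : Function.Bijective T)
    (F : Y → ℝ) (s : Finset ℕ) :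
    ∑ y, |∑ i ∈ s, F (T^[i] y)| ≤ s.card * ∑ y, |F y| := by
  calc ∑ y, |∑ i ∈ s, F (T^[i] y)|
      ≤ ∑ y, ∑ i ∈ s, |F (T^[i] y)| :=
        Finset.sum_le_sum fun y _ => Finset.abs_sum_le_sum_abs _ _
    _ = ∑ i ∈ s, ∑ y, |F (T^[i] y)| := Finset.sum_comm
    _ = ∑ i ∈ s, ∑ y, |F y| :=
        Finset.sum_congr rfl fun i _ => (hT.iterate i).sum_comp fun y => |F y|
    _ = s.card * ∑ y, |F y| := by rw [Finset.sum_const, nsmul_eq_mul]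

lemma sum_abs_sum_range_sub_sum_range_le {Y : Type*} [Fintype Y] {T : Y → Y}
    (hT : Function.Bijective T) (F : Y → ℝ) (K L : ℕ) :
    ∑ y, |∑ i ∈ Finset.range K, F (T^[i] y) - ∑ i ∈ Finset.range L, F (T^[i] y)|
      ≤ |(K : ℝ) - L| * ∑ y, |F y| := by
  wlog h : L ≤ K generalizing K L
  · simpa only [abs_sub_comm] using this L K (le_of_not_ge h)
  · simp only [← Finset.sum_Ico_eq_sub _ h]
    rw [← Nat.cast_sub h, Nat.abs_cast, ← Nat.card_Ico]
    exact sum_abs_sum_iterate_le hT F _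

/-- The `ℓ¹` distance between two ergodic averages is controlled by the ratio of their lengths. -/
lemma sum_abs_ergAvg_sub_ergAvg_le {Y : Type*} [Fintype Y] {T : Y → Y}
    (hT : Function.Bijective T) (F : Y → ℝ) {K L : ℕ} (hK : 1 ≤ K) (hL : 1 ≤ L) :
    ∑ y, |ergAvg T F K y - ergAvg T F L y| ≤ 2 * |(K : ℝ) / L - 1| * ∑ y, |F y| := by
  have hK0 : (0 : ℝ) < K := by exact_mod_cast hK
  have hL0 : (0 : ℝ) < L := by exact_mod_cast hL
  have hratio : |(K : ℝ) - L| = L * |(K : ℝ) / L - 1| := by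
    rw [← abs_of_pos hL0, ← abs_mul, abs_of_pos hL0]
    congr 1
    field_simp
  set r := |(K : ℝ) / L - 1|
  have hpoint : ∀ y, |ergAvg T F K y - ergAvg T F L y| ≤
      r / K * |∑ i ∈ Finset.range K, F (T^[i] y)| +
      1 / L * |∑ i ∈ Finset.range K, F (T^[i] y) - ∑ i ∈ Finset.range L, F (T^[i] y)| := by
    intro y
    have hsplit : ergAvg T F K y - ergAvg T F L y =
        -(((K : ℝ) / L - 1) / K * ∑ i ∈ Finset.range K, F (T^[i] y)) +
        1 / L * (∑ i ∈ Finset.range K, F (T^[i] y) - ∑ i ∈ Finset.range L, F (T^[i] y)) := by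
      unfold ergAvg
      field_simp
      ring
    rw [hsplit]
    refine (abs_add_le _ _).trans_eq ?_
    rw [abs_neg, abs_mul, abs_mul, abs_div, abs_of_pos hK0, abs_of_pos (one_div_pos.2 hL0)]
  calc ∑ y, |ergAvg T F K y - ergAvg T F L y|
      ≤ r / K * ∑ y, |∑ i ∈ Finset.range K, F (T^[i] y)| + 1 / L * ∑ y,
          |∑ i ∈ Finset.range K, F (T^[i] y) - ∑ i ∈ Finset.range L, F (T^[i] y)| := by
        rw [Finset.mul_sum, Finset.mul_sum, ← Finset.sum_add_distrib]
        exact Finset.sum_le_sum fun y _ => hpoint y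
    _ ≤ r / K * (K * ∑ y, |F y|) + 1 / L * (L * r * ∑ y, |F y|) := by
        gcongr
        · simpa using sum_abs_sum_iterate_le hT F (Finset.range K)
        · rw [← hratio]
          exact sum_abs_sum_range_sub_sum_range_le hT F K L
    _ = 2 * r * ∑ y, |F y| := by
        field_simp
        ring

open scoped Classical in
lemma sum_abs_le_card_mul_add_sum_filter {Y : Type*} [Fintype Y] (F : Y → ℝ) (k : ℕ) :
    ∑ y, |F y| ≤ Fintype.card Y * (k : ℝ) +
      ∑ y ∈ Finset.univ.filter (fun y => (k : ℝ) < |F y|), |F y| := by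
  rw [Finset.sum_filter, ← nsmul_eq_mul, ← Finset.card_univ, ← Finset.sum_const,
    ← Finset.sum_add_distrib]
  refine Finset.sum_le_sum fun y _ => ?_
  split_ifs with h
  · exact le_add_of_nonneg_left k.cast_nonneg
  · simpa using h

open scoped Classical in
/-- For a sequence of finite sets `Y n` of cardinality `M n → ∞`, permutations `T n`,
a uniformly integrable sequence `F n`, and sequences `K n, L n ≥ 1` with `K n / M n`
bounded, `liminf K n / M n > 0` and `K n / L n → 1`, the proportion of points where the
ergodic averages `A_{K n}` and `A_{L n}` differ by at least `ε` tends to `0`. -/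
theorem erg_mean_stabilization_in_measure
    (Y : ℕ → Type*) [∀ n, Fintype (Y n)] [∀ n, Nonempty (Y n)]
    (hMtop : Tendsto (fun n => Fintype.card (Y n)) atTop atTop)
    (T : ∀ n, Y n → Y n) (hT : ∀ n, Function.Bijective (T n))
    (F : ∀ n, Y n → ℝ)
    (hUI : ∀ ε > (0 : ℝ), ∃ n₀ k₀ : ℕ, ∀ n ≥ n₀, ∀ k ≥ k₀,
      (1 / (Fintype.card (Y n) : ℝ)) *
        ∑ x ∈ Finset.univ.filter (fun x : Y n => (k : ℝ) < |F n x|), |F n x| < ε)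
    (K L : ℕ → ℕ) (hK1 : ∀ n, 1 ≤ K n) (hL1 : ∀ n, 1 ≤ L n)
    (hKbdd : ∃ B : ℝ, ∀ n, (K n : ℝ) / (Fintype.card (Y n) : ℝ) ≤ B)
    (hKpos : 0 < Filter.atTop.liminf (fun n => (K n : ℝ) / (Fintype.card (Y n) : ℝ)))
    (hKL : Tendsto (fun n => (K n : ℝ) / (L n : ℝ)) atTop (𝓝 1)) :
    ∀ ε > (0 : ℝ),
      Tendsto (fun n => (1 / (Fintype.card (Y n) : ℝ)) *
          ((Finset.univ.filter (fun y : Y n =>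
            ε ≤ |ergAvg (T n) (F n) (K n) y - ergAvg (T n) (F n) (L n) y|)).card : ℝ))
        atTop (𝓝 0) := by
  intro ε hε
  obtain ⟨n₀, k₀, hk⟩ := hUI 1 one_pos
  have hlim : Tendsto (fun n => 2 * |(K n : ℝ) / (L n : ℝ) - 1| * ((k₀ : ℝ) + 1) / ε)
      atTop (𝓝 0) := by
    simpa using (((hKL.sub_const 1).abs.const_mul 2).mul_const ((k₀ : ℝ) + 1)).div_const ε
  refine tendsto_of_tendsto_of_tendsto_of_le_of_le' tendsto_const_nhds hlim
    (Eventually.of_forall fun n => by positivity) ?_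
  filter_upwards [eventually_ge_atTop n₀] with n hn
  have hM : (0 : ℝ) < Fintype.card (Y n) := by exact_mod_cast Fintype.card_pos
  have hF : ∑ y, |F n y| ≤ Fintype.card (Y n) * ((k₀ : ℝ) + 1) := by
    have htail := hk n hn k₀ le_rfl
    rw [one_div, inv_mul_lt_iff₀ hM] at htail
    linarith [sum_abs_le_card_mul_add_sum_filter (F n) k₀]
  set D : Y n → ℝ := fun y => |ergAvg (T n) (F n) (K n) y - ergAvg (T n) (F n) (L n) y|
  have hmarkov : ((Finset.univ.filter fun y => ε ≤ D y).card : ℝ) * ε ≤ ∑ y, D y := by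
    rw [← nsmul_eq_mul]
    exact (Finset.card_nsmul_le_sum _ D ε fun y hy => (Finset.mem_filter.1 hy).2).trans
      (Finset.sum_le_univ_sum_of_nonneg fun y => abs_nonneg _)
  rw [one_div, inv_mul_le_iff₀ hM, ← mul_div_assoc, le_div_iff₀ hε]
  calc _ ≤ ∑ y, D y := hmarkov
    _ ≤ 2 * |(K n : ℝ) / L n - 1| * ∑ y, |F n y| :=
        sum_abs_ergAvg_sub_ergAvg_le (hT n) (F n) (hK1 n) (hL1 n)
    _ ≤ 2 * |(K n : ℝ) / L n - 1| * (Fintype.card (Y n) * ((k₀ : ℝ) + 1)) := by gcongr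
    _ = _ := by ring
end

section
/- Let Y_n be a sequence of finite nonempty sets with |Y_n| = M_n → ∞, let T_n : Y_n → Y_n be permutations, and let F_n : Y_n → ℝ be a uniformly integrable sequence. Let K_n and L_n be sequences of positive natural numbers such that K_n/M_n is bounded, liminf_{n→∞} K_n/M_n > 0, and lim_{n→∞} K_n/L_n = 1. If, in addition, every T_n is a transitive permutation (a single cycle of length M_n), or the functions F_n are uniformly bounded (sup_n max_{y ∈ Y_n} |F_n(y)| < ∞), then lim_{n→∞} max_{y ∈ Y_n} |A_{K_n}(F_n,T_n,y) − A_{L_n}(F_n,T_n,y)| = 0. -/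
open Filter Topology

/-- Comparison of two Cesàro averages of a sequence dominated by a constant plus a nonnegative
error. -/
lemma abs_average_sub_average_le (u h : ℕ → ℝ) {k : ℝ} (hh : ∀ i, 0 ≤ h i)
    (hu : ∀ i, |u i| ≤ k + h i) {a b : ℕ} (ha : 0 < a) (hab : a ≤ b) :
    |(1 / (a : ℝ)) * ∑ i ∈ Finset.range a, u i - (1 / (b : ℝ)) * ∑ i ∈ Finset.range b, u i| ≤
      2 * k * ((b - a) / b) + (1 / (a : ℝ)) * ∑ i ∈ Finset.range b, h i := by
  have ha' : (0 : ℝ) < a := by exact_mod_cast ha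
  have hab' : (a : ℝ) ≤ b := by exact_mod_cast hab
  have hb' : (0 : ℝ) < b := ha'.trans_le hab'
  have hinv : (1 : ℝ) / b ≤ 1 / a := one_div_le_one_div_of_le ha' hab'
  have hinv0 : (0 : ℝ) < 1 / b := by positivity
  rw [← Finset.sum_range_add_sum_Ico u hab, ← Finset.sum_range_add_sum_Ico h hab]
  have hS : |∑ i ∈ Finset.range a, u i| ≤ a * k + ∑ i ∈ Finset.range a, h i := by
    refine (Finset.abs_sum_le_sum_abs _ _).trans ((Finset.sum_le_sum fun i _ => hu i).trans ?_)
    simp [Finset.sum_add_distrib]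
  have hR : |∑ i ∈ Finset.Ico a b, u i| ≤ (b - a) * k + ∑ i ∈ Finset.Ico a b, h i := by
    refine (Finset.abs_sum_le_sum_abs _ _).trans ((Finset.sum_le_sum fun i _ => hu i).trans ?_)
    simp [Finset.sum_add_distrib, Nat.cast_sub hab]
  have hS0 : 0 ≤ ∑ i ∈ Finset.range a, h i := Finset.sum_nonneg fun i _ => hh i
  have hR0 : 0 ≤ ∑ i ∈ Finset.Ico a b, h i := Finset.sum_nonneg fun i _ => hh i
  generalize ∑ i ∈ Finset.range a, u i = S at *
  generalize ∑ i ∈ Finset.Ico a b, u i = R at *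
  generalize ∑ i ∈ Finset.range a, h i = p at *
  generalize ∑ i ∈ Finset.Ico a b, h i = q at *
  calc |1 / (a : ℝ) * S - 1 / b * (S + R)| = |(1 / (a : ℝ) - 1 / b) * S - 1 / b * R| := by
        ring_nf
    _ ≤ (1 / (a : ℝ) - 1 / b) * |S| + 1 / b * |R| := by
        refine (abs_sub _ _).trans_eq ?_
        rw [abs_mul, abs_mul, abs_of_nonneg (sub_nonneg.2 hinv), abs_of_pos hinv0]
    _ ≤ (1 / (a : ℝ) - 1 / b) * (a * k + p) + 1 / b * ((b - a) * k + q) := by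
        have := sub_nonneg.2 hinv
        gcongr
    _ = 2 * k * ((b - a) / b) + ((1 / (a : ℝ) - 1 / b) * p + 1 / b * q) := by
        field_simp
        ring
    _ ≤ 2 * k * ((b - a) / b) + 1 / a * (p + q) := by
        nlinarith [mul_nonneg hinv0.le hS0, mul_le_mul_of_nonneg_right hinv hR0]

/-- Along a transitive permutation, the orbit segment of length `|Y|` visits each point once. -/
lemma sum_range_card_iterate_of_transitive {Y : Type*} [Fintype Y] {T : Y → Y}
    (hT : Function.Bijective T) (htr : ∃ x, ∀ y, ∃ i : ℕ, T^[i] x = y) (h : Y → ℝ) (y : Y) :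
    ∑ i ∈ Finset.range (Fintype.card Y), h (T^[i] y) = ∑ x, h x := by
  obtain ⟨x, hx⟩ := htr
  let e : Equiv.Perm Y := Equiv.ofBijective T hT
  have he : ∀ i : ℕ, ∀ z, (e ^ i) z = T^[i] z := fun i z => by
    rw [Equiv.Perm.coe_pow]; rfl
  have hxs : ∀ z, e.SameCycle x z := fun z => by
    obtain ⟨i, hi⟩ := hx z
    exact ⟨i, by rw [zpow_natCast, he, hi]⟩
  have hcyc : e.IsCycleOn ((Finset.univ : Finset Y) : Set Y) :=
    ⟨by simp, fun z _ w _ => (hxs z).symm.trans (hxs w)⟩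
  have hsurj : Function.Surjective fun i : Fin (Fintype.card Y) => T^[(i : ℕ)] y := fun z => by
    obtain ⟨i, hi, hz⟩ := hcyc.exists_pow_eq (Finset.mem_univ y) (Finset.mem_univ z)
    exact ⟨⟨i, hi⟩, by rw [← hz, he]⟩
  have hbij := (Fintype.bijective_iff_surjective_and_card _).2 ⟨hsurj, Fintype.card_fin _⟩
  rw [← Fin.sum_univ_eq_sum_range fun i => h (T^[i] y)]
  exact hbij.sum_comp h

lemma sum_range_mul_card_iterate_of_transitive {Y : Type*} [Fintype Y] {T : Y → Y}
    (hT : Function.Bijective T) (htr : ∃ x, ∀ y, ∃ i : ℕ, T^[i] x = y) (h : Y → ℝ) (y : Y)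
    (q : ℕ) :
    ∑ i ∈ Finset.range (q * Fintype.card Y), h (T^[i] y) = q * ∑ x, h x := by
  induction q with
  | zero => simp
  | succ q ih =>
    rw [Nat.succ_mul, Finset.sum_range_add, ih]
    have := sum_range_card_iterate_of_transitive hT htr h (T^[q * Fintype.card Y] y)
    simp only [← Function.iterate_add_apply, add_comm _ (q * Fintype.card Y)] at this
    rw [this]
    push_cast
    ring

/-- An orbit sum of a nonnegative function of small mean is small, for a transitive permutation. -/
lemma sum_range_iterate_le_of_transitive {Y : Type*} [Fintype Y] [Nonempty Y] {T : Y → Y}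
    (hT : Function.Bijective T) (htr : ∃ x, ∀ y, ∃ i : ℕ, T^[i] x = y) {h : Y → ℝ}
    (hh : ∀ x, 0 ≤ h x) {ε : ℝ} (hε : (1 / (Fintype.card Y : ℝ)) * ∑ x, h x ≤ ε) (y : Y) (m : ℕ) :
    ∑ i ∈ Finset.range m, h (T^[i] y) ≤ ε * (m + Fintype.card Y) := by
  have hM : 0 < Fintype.card Y := Fintype.card_pos
  have hM' : (0 : ℝ) < Fintype.card Y := by exact_mod_cast hM
  have hε0 : 0 ≤ ε :=
    (mul_nonneg (by positivity) (Finset.sum_nonneg fun x _ => hh x)).trans hε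
  have hsum : ∑ x, h x ≤ ε * Fintype.card Y := by
    rwa [one_div, inv_mul_le_iff₀ hM', mul_comm] at hε
  have hm : m ≤ (m / Fintype.card Y + 1) * Fintype.card Y := by
    rw [mul_comm]; exact (Nat.lt_mul_div_succ m hM).le
  have hq : ((m / Fintype.card Y : ℕ) : ℝ) * Fintype.card Y ≤ m := by
    exact_mod_cast Nat.div_mul_le_self m _
  calc ∑ i ∈ Finset.range m, h (T^[i] y)
      ≤ ∑ i ∈ Finset.range ((m / Fintype.card Y + 1) * Fintype.card Y), h (T^[i] y) :=
        Finset.sum_le_sum_of_subset_of_nonneg (Finset.range_mono hm) fun _ _ _ => hh _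
    _ = ((m / Fintype.card Y : ℕ) + 1) * ∑ x, h x := by
        rw [sum_range_mul_card_iterate_of_transitive hT htr]; push_cast; rfl
    _ ≤ ((m / Fintype.card Y : ℕ) + 1) * (ε * Fintype.card Y) := by gcongr
    _ = ε * ((m / Fintype.card Y : ℕ) * Fintype.card Y + Fintype.card Y) := by ring
    _ ≤ ε * (m + Fintype.card Y) := by gcongr

/-- Two ergodic averages over orbit segments of comparable lengths `a ≤ b` are close. -/
lemma abs_ergAvg_sub_ergAvg_le {Y : Type*} [Fintype Y] {T : Y → Y} {F h : Y → ℝ}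
    {k ε δ c : ℝ} (hk : 0 ≤ k) (hε : 0 ≤ ε) (hh : ∀ x, 0 ≤ h x) (hF : ∀ x, |F x| ≤ k + h x)
    (y : Y) {a b : ℕ} (hsum : ∑ i ∈ Finset.range b, h (T^[i] y) ≤ ε * (b + Fintype.card Y))
    (ha : 0 < a) (hab : a ≤ b) (hδ : (b : ℝ) - a ≤ δ * b) (hba : (b : ℝ) ≤ 2 * a)
    (hc : (Fintype.card Y : ℝ) ≤ c * a) :
    |ergAvg T F a y - ergAvg T F b y| ≤ 2 * k * δ + ε * (2 + c) := by
  have ha' : (0 : ℝ) < a := by exact_mod_cast ha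
  have hb' : (0 : ℝ) < b := by exact_mod_cast ha.trans_le hab
  refine (abs_average_sub_average_le (fun i => F (T^[i] y)) (fun i => h (T^[i] y))
    (fun i => hh _) (fun i => hF _) ha hab).trans (add_le_add ?_ ?_)
  · have : ((b : ℝ) - a) / b ≤ δ := (div_le_iff₀ hb').2 hδ
    gcongr
  · rw [one_div, inv_mul_le_iff₀ ha']
    refine hsum.trans ?_
    calc ε * (b + Fintype.card Y) ≤ ε * (2 * a + c * a) := by gcongr
      _ = a * (ε * (2 + c)) := by ring

open scoped Classical in
/-- Truncation of `F n` into a uniformly bounded part and a part with small orbit sums. -/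
lemma exists_bound_add_small_orbit_sum
    (Y : ℕ → Type*) [∀ n, Fintype (Y n)] [∀ n, Nonempty (Y n)]
    (T : ∀ n, Y n → Y n) (hT : ∀ n, Function.Bijective (T n))
    (F : ∀ n, Y n → ℝ)
    (hUI : ∀ ε > (0 : ℝ), ∃ n₀ k₀ : ℕ, ∀ n ≥ n₀, ∀ k ≥ k₀,
      (1 / (Fintype.card (Y n) : ℝ)) *
        ∑ x ∈ Finset.univ.filter (fun x : Y n => (k : ℝ) < |F n x|), |F n x| < ε)
    (hextra : (∀ n, ∃ x : Y n, ∀ y : Y n, ∃ i : ℕ, (T n)^[i] x = y) ∨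
      (∃ B : ℝ, ∀ n, ∀ y : Y n, |F n y| ≤ B)) {ε : ℝ} (hε : 0 < ε) :
    ∃ k : ℝ, 0 ≤ k ∧ ∃ h : ∀ n, Y n → ℝ, (∀ n x, 0 ≤ h n x) ∧
      (∀ n x, |F n x| ≤ k + h n x) ∧
      ∀ᶠ n in atTop, ∀ (y : Y n) (m : ℕ),
        ∑ i ∈ Finset.range m, h n ((T n)^[i] y) ≤ ε * (m + Fintype.card (Y n)) := by
  rcases hextra with htr | ⟨B, hB⟩
  · obtain ⟨n₀, k, hk⟩ := hUI ε hε
    have hnonneg : ∀ n (x : Y n), 0 ≤ if (k : ℝ) < |F n x| then |F n x| else 0 := fun n x => by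
      split_ifs <;> positivity
    refine ⟨k, k.cast_nonneg, fun n x => if (k : ℝ) < |F n x| then |F n x| else 0,
      hnonneg, fun n x => ?_, ?_⟩
    · have := k.cast_nonneg (α := ℝ)
      dsimp only
      split_ifs <;> linarith
    · filter_upwards [eventually_ge_atTop n₀] with n hn
      have := hk n hn k le_rfl
      rw [Finset.sum_filter] at this
      exact sum_range_iterate_le_of_transitive (hT n) (htr n) (hnonneg n) this.le
  · refine ⟨|B|, abs_nonneg B, fun _ _ => 0, fun _ _ => le_rfl,
      fun n x => by simpa using (hB n x).trans (le_abs_self B), .of_forall fun n y m => ?_⟩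
    rw [Finset.sum_const_zero]
    positivity

open scoped Classical in
/-- For a sequence of finite sets `Y n` with `|Y n| = M n → ∞`, permutations `T n`,
a uniformly integrable sequence `F n`, and sequences `K n, L n ≥ 1` with `K n / M n`
bounded, `liminf K n / M n > 0` and `K n / L n → 1`: if in addition each `T n` is
transitive (a single cycle of length `M n`), or the `F n` are uniformly bounded, then
`max_{y ∈ Y n} |A_{K n}(F n,T n,y) − A_{L n}(F n,T n,y)| → 0`. -/
theorem erg_mean_stabilization_uniform
    (Y : ℕ → Type*) [∀ n, Fintype (Y n)] [∀ n, Nonempty (Y n)]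
    (hMtop : Tendsto (fun n => Fintype.card (Y n)) atTop atTop)
    (T : ∀ n, Y n → Y n) (hT : ∀ n, Function.Bijective (T n))
    (F : ∀ n, Y n → ℝ)
    (hUI : ∀ ε > (0 : ℝ), ∃ n₀ k₀ : ℕ, ∀ n ≥ n₀, ∀ k ≥ k₀,
      (1 / (Fintype.card (Y n) : ℝ)) *
        ∑ x ∈ Finset.univ.filter (fun x : Y n => (k : ℝ) < |F n x|), |F n x| < ε)
    (K L : ℕ → ℕ) (hK1 : ∀ n, 1 ≤ K n) (hL1 : ∀ n, 1 ≤ L n)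
    (hKbdd : ∃ B : ℝ, ∀ n, (K n : ℝ) / (Fintype.card (Y n) : ℝ) ≤ B)
    (hKpos : 0 < Filter.atTop.liminf (fun n => (K n : ℝ) / (Fintype.card (Y n) : ℝ)))
    (hKL : Tendsto (fun n => (K n : ℝ) / (L n : ℝ)) atTop (𝓝 1))
    (hextra : (∀ n, ∃ x : Y n, ∀ y : Y n, ∃ i : ℕ, (T n)^[i] x = y) ∨
      (∃ B : ℝ, ∀ n, ∀ y : Y n, |F n y| ≤ B)) :
    Tendsto (fun n => Finset.univ.sup' Finset.univ_nonempty (fun y : Y n =>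
        |ergAvg (T n) (F n) (K n) y - ergAvg (T n) (F n) (L n) y|))
      atTop (𝓝 0) := by
  have hbdd : atTop.IsBoundedUnder (· ≥ ·) fun n => (K n : ℝ) / (Fintype.card (Y n) : ℝ) :=
    isBoundedUnder_of ⟨0, fun n => by positivity⟩
  obtain ⟨c, hc, hcK⟩ := exists_between hKpos
  have hKc := eventually_lt_of_lt_liminf hcK hbdd
  rw [Metric.tendsto_nhds]
  intro ε hε
  obtain ⟨k, hk, h, hh, hF, hsum⟩ := exists_bound_add_small_orbit_sum Y T hT F hUI hextra
    (ε := ε / (2 * (2 + 2 / c))) (by positivity)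
  obtain ⟨δ, hδ, hδ2, hδk⟩ : ∃ δ : ℝ, 0 < δ ∧ δ ≤ 1 / 2 ∧ 2 * k * δ ≤ ε / 4 := by
    refine ⟨min (1 / 2) (ε / (8 * (k + 1))), by positivity, min_le_left _ _, ?_⟩
    calc 2 * k * min (1 / 2) (ε / (8 * (k + 1))) ≤ 2 * (k + 1) * (ε / (8 * (k + 1))) := by
          gcongr
          · linarith
          · exact min_le_right _ _
      _ = ε / 4 := by field_simp; norm_num
  filter_upwards [hsum, hKc, Metric.tendsto_nhds.1 hKL δ hδ] with n hn hKn hKLn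
  have hM : (0 : ℝ) < Fintype.card (Y n) := by exact_mod_cast Fintype.card_pos
  have hL : (0 : ℝ) < L n := by exact_mod_cast hL1 n
  have hMK : (Fintype.card (Y n) : ℝ) ≤ 1 / c * K n := by
    rw [lt_div_iff₀ hM] at hKn
    rw [one_div, le_inv_mul_iff₀ hc]
    exact hKn.le
  rw [Real.dist_eq, abs_lt, lt_sub_iff_add_lt, sub_lt_iff_lt_add, lt_div_iff₀ hL,
    div_lt_iff₀ hL] at hKLn
  obtain ⟨hlow, hupp⟩ := hKLn
  have hδL : δ * L n ≤ 1 / 2 * L n := by gcongr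
  have hbound : ∀ y : Y n,
      |ergAvg (T n) (F n) (K n) y - ergAvg (T n) (F n) (L n) y| < ε := fun y => by
    suffices |ergAvg (T n) (F n) (K n) y - ergAvg (T n) (F n) (L n) y| ≤
        2 * k * δ + ε / (2 * (2 + 2 / c)) * (2 + 2 / c) by
      have hhalf : ε / (2 * (2 + 2 / c)) * (2 + 2 / c) = ε / 2 := by field_simp
      linarith
    rcases le_total (K n) (L n) with hle | hle
    · refine abs_ergAvg_sub_ergAvg_le hk (by positivity) (hh n) (hF n) y (hn y _) (hK1 n) hle
        (by linarith) (by linarith) ?_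
      calc (Fintype.card (Y n) : ℝ) ≤ 1 / c * K n := hMK
        _ ≤ 2 / c * K n := by gcongr; norm_num
    · have hle' : (L n : ℝ) ≤ K n := by exact_mod_cast hle
      have hδK : δ * L n ≤ δ * K n := by gcongr
      rw [abs_sub_comm]
      refine abs_ergAvg_sub_ergAvg_le hk (by positivity) (hh n) (hF n) y (hn y _) (hL1 n) hle
        (by linarith) (by linarith) ?_
      calc (Fintype.card (Y n) : ℝ) ≤ 1 / c * K n := hMK
        _ ≤ 1 / c * (2 * L n) := by gcongr; linarith
        _ = 2 / c * L n := by ring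
  rw [Real.dist_eq, sub_zero, abs_of_nonneg]
  · simpa only [Finset.sup'_lt_iff, Finset.mem_univ, true_imp_iff] using hbound
  · obtain ⟨y⟩ := (inferInstance : Nonempty (Y n))
    exact (abs_nonneg _).trans (Finset.le_sup' (fun y : Y n =>
      |ergAvg (T n) (F n) (K n) y - ergAvg (T n) (F n) (L n) y|) (Finset.mem_univ y))
end

section
/- Let Y_n be a sequence of finite nonempty sets with |Y_n| = M_n → ∞, let T_n : Y_n → Y_n be transitive permutations (single cycles of length M_n), and let F_n : Y_n → ℝ be a uniformly integrable sequence. For y ∈ Y_n let Fl(ε, n, y) denote the number of ε-fluctuations of the finite sequence (A_j(F_n,T_n,y))_{j=1}^{M_n}, and let U(k, ε, n) = {y ∈ Y_n : Fl(ε, n, y) ≤ k}. Then for all ε > 0 and δ > 0 there exist N and k such that for all n > N, (1/M_n)·|U(k, ε, n)| ≥ 1 − δ. -/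
open Filter Topology

/-- A finite real sequence `(s 1, …, s L)` admits `k` `ε`-fluctuations if there are
indices `1 ≤ n₁ < n₂ < … < n_{2k} ≤ L` with `|s n_{2i-1} − s n_{2i}| ≥ ε` for each
`i ≤ k`. -/
def admitsFluct (s : ℕ → ℝ) (L : ℕ) (ε : ℝ) (k : ℕ) : Prop :=
  ∃ m : ℕ → ℕ, StrictMono m ∧ (∀ i < 2 * k, 1 ≤ m i ∧ m i ≤ L) ∧
    ∀ i < k, ε ≤ |s (m (2 * i)) - s (m (2 * i + 1))|

/-- The number of `ε`-fluctuations of the finite sequence `(s 1, …, s L)`: the largest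
`k` such that the sequence admits `k` `ε`-fluctuations. -/
noncomputable def numFluct (s : ℕ → ℝ) (L : ℕ) (ε : ℝ) : ℕ :=
  sSup {k | admitsFluct s L ε k}

/-- `TradeChain N p q t k s`: there are times `t ≤ u₁ < v₁ ≤ u₂ < v₂ ≤ … ≤ u_k < v_k ≤ N` with
total gain `∑ (q vᵢ - p uᵢ) = s`. -/
inductive TradeChain (N : ℕ) (p q : ℕ → ℝ) : ℕ → ℕ → ℝ → Prop
  | nil (t : ℕ) : TradeChain N p q t 0 0
  | cons {t u v k : ℕ} {s : ℝ} (htu : t ≤ u) (huv : u < v) (hv : v ≤ N)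
      (h : TradeChain N p q v k s) : TradeChain N p q t (k + 1) (q v - p u + s)

/-- `Upcrossings N p q t k`: there are times `t ≤ u₁ < v₁ ≤ u₂ < v₂ ≤ … ≤ u_k < v_k ≤ N` with
`p uᵢ ≤ 0 ≤ q vᵢ` for all `i`. -/
inductive Upcrossings (N : ℕ) (p q : ℕ → ℝ) : ℕ → ℕ → Prop
  | nil (t : ℕ) : Upcrossings N p q t 0
  | cons {t u v k : ℕ} (htu : t ≤ u) (huv : u < v) (hv : v ≤ N) (hp : p u ≤ 0) (hq : 0 ≤ q v)
      (h : Upcrossings N p q v k) : Upcrossings N p q t (k + 1)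

theorem Upcrossings.of_succ {N : ℕ} {p q : ℕ → ℝ} {k : ℕ} :
    ∀ {t : ℕ}, Upcrossings N p q t (k + 1) → Upcrossings N p q t k := by
  induction k with
  | zero => exact fun _ => .nil _
  | succ k ih =>
    intro t h
    cases h with
    | cons htu huv hv hp hq h => exact .cons htu huv hv hp hq (ih h)

theorem Upcrossings.of_le {N : ℕ} {p q : ℕ → ℝ} {t j k : ℕ} (h : Upcrossings N p q t k)
    (hjk : j ≤ k) : Upcrossings N p q t j := by
  induction k, hjk using Nat.le_induction with
  | base => exact h
  | succ k _ ih => exact ih h.of_succ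

/-- A chain with fewer trades than there are upcrossings can be refined without loss. -/
theorem TradeChain.exists_succ {N : ℕ} {p q : ℕ → ℝ} {t j : ℕ} {s : ℝ}
    (hc : TradeChain N p q t j s) (hu : Upcrossings N p q t (j + 1)) :
    ∃ s', s ≤ s' ∧ TradeChain N p q t (j + 1) s' := by
  induction hc with
  | nil t =>
    cases hu with
    | cons htu huv hv hp hq h =>
      exact ⟨_, by linarith, .cons htu huv hv (.nil _)⟩
  | @cons t u v k s htu huv hv hc ih =>
    cases hu with
    | @cons _ u₁ v₁ _ htu₁ huv₁ hv₁ hp₁ hq₁ h =>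
      rcases le_or_gt v₁ u with hvu | hvu
      · exact ⟨_, by linarith, .cons htu₁ huv₁ hv₁ (.cons hvu huv hv hc)⟩
      · cases h with
        | @cons _ u₂ v₂ _ htu₂ huv₂ hv₂ hp₂ hq₂ h =>
          rcases lt_or_ge u₂ v with huv' | huv'
          · exact ⟨_, by linarith, .cons htu hvu hv₁ (.cons htu₂ huv' hv hc)⟩
          · obtain ⟨s', hs, hc'⟩ := ih (.cons huv' huv₂ hv₂ hp₂ hq₂ h)
            exact ⟨_, by linarith, .cons htu huv hv hc'⟩

theorem TradeChain.exists_of_le {N : ℕ} {p q : ℕ → ℝ} {t j k : ℕ} {s : ℝ}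
    (hc : TradeChain N p q t j s) (hjk : j ≤ k) (hu : Upcrossings N p q t k) :
    ∃ s', s ≤ s' ∧ TradeChain N p q t k s' := by
  induction k, hjk using Nat.le_induction with
  | base => exact ⟨s, le_rfl, hc⟩
  | succ k _ ih =>
    obtain ⟨s₁, h₁, hc₁⟩ := ih hu.of_succ
    obtain ⟨s₂, h₂, hc₂⟩ := hc₁.exists_succ hu
    exact ⟨s₂, h₁.trans h₂, hc₂⟩

theorem TradeChain.finite_values (N : ℕ) (p q : ℕ → ℝ) (k : ℕ) :
    ∀ t, {s | TradeChain N p q t k s}.Finite := by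
  induction k with
  | zero =>
    intro t
    refine (Set.finite_singleton (0 : ℝ)).subset ?_
    rintro s h
    cases h
    rfl
  | succ k ih =>
    intro t
    have hfin : (⋃ u ∈ Set.Iic N, ⋃ v ∈ Set.Iic N,
        (fun s => q v - p u + s) '' {s | TradeChain N p q v k s}).Finite :=
      (Set.finite_Iic N).biUnion fun u _ => (Set.finite_Iic N).biUnion fun v _ => (ih v).image _
    refine hfin.subset ?_
    rintro s h
    cases h with
    | @cons _ u v _ s htu huv hv h =>
      simp only [Set.mem_iUnion]
      exact ⟨u, (huv.le.trans hv : u ≤ N), v, hv, s, h, rfl⟩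

theorem TradeChain.exists_isGreatest (N : ℕ) (p q : ℕ → ℝ) (k : ℕ) :
    ∃ m, IsGreatest {s | ∃ j ≤ k, TradeChain N p q 0 j s} m := by
  have hfin : {s | ∃ j ≤ k, TradeChain N p q 0 j s}.Finite := by
    refine ((Set.finite_Iic k).biUnion fun j _ => finite_values N p q j 0).subset ?_
    rintro s ⟨j, hj, h⟩
    simp only [Set.mem_iUnion]
    exact ⟨j, hj, h⟩
  obtain ⟨m, hm, hmax⟩ := Set.exists_max_image _ id hfin ⟨0, 0, Nat.zero_le _, .nil _⟩
  exact ⟨m, hm, fun s hs => hmax s hs⟩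

section Shift

variable {N : ℕ} {p q p' q' : ℕ → ℝ} {a η : ℝ}

theorem TradeChain.shift_succ (hp : ∀ n, p (n + 1) = a + p' n)
    (hq : ∀ n, q (n + 1) = a - η + q' n) {t j : ℕ} {s : ℝ} (h : TradeChain N p q t j s) :
    ∀ t', t = t' + 1 → TradeChain N p' q' t' j (s + j * η) := by
  induction h with
  | nil t =>
    intro t' _
    simpa using TradeChain.nil (N := N) (p := p') (q := q') t'
  | @cons t u v k s htu huv hv h ih =>
    rintro t' rfl
    obtain ⟨u, rfl⟩ : ∃ m, u = m + 1 := ⟨u - 1, by omega⟩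
    obtain ⟨v, rfl⟩ : ∃ m, v = m + 1 := ⟨v - 1, by omega⟩
    have := TradeChain.cons (t := t') (u := u) (p := p') (by omega) (by omega) (by omega) (ih v rfl)
    convert this using 1
    rw [hp, hq]
    push_cast
    ring

/-- Passing from the orbit of a point to the orbit of its image gains `η` per trade, up to the
positive part of the first increment. -/
theorem TradeChain.shift (hp₀ : p 0 = 0) (hp₀' : p' 0 = 0) (hq₀' : q' 0 = 0)
    (hp : ∀ n, p (n + 1) = a + p' n) (hq : ∀ n, q (n + 1) = a - η + q' n)
    {j : ℕ} {s : ℝ} (h : TradeChain N p q 0 j s) :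
    ∃ j' ≤ j, ∃ s', TradeChain N p' q' 0 j' s' ∧ s + j * η ≤ s' + max a 0 := by
  have ha : a ≤ max a 0 := le_max_left _ _
  have ha₀ : 0 ≤ max a 0 := le_max_right _ _
  cases h with
  | nil => exact ⟨0, le_rfl, 0, .nil _, by simp⟩
  | @cons _ u v k s htu huv hv h =>
    obtain ⟨v, rfl⟩ : ∃ m, v = m + 1 := ⟨v - 1, by omega⟩
    rcases Nat.eq_zero_or_pos u with rfl | hu
    · have h' := h.shift_succ hp hq v rfl
      rcases Nat.eq_zero_or_pos v with rfl | hv₀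
      · refine ⟨k, by omega, _, h', ?_⟩
        rw [hp₀, hq, hq₀']
        push_cast
        linarith
      · refine ⟨k + 1, le_rfl, _, .cons le_rfl hv₀ (by omega) h', ?_⟩
        rw [hp₀, hq, hp₀']
        push_cast
        linarith
    · have h' := (TradeChain.cons (t := 1) hu huv hv h).shift_succ hp hq 0 rfl
      exact ⟨k + 1, le_rfl, _, h', by linarith⟩

end Shift

/-- The points whose ergodic averages up to time `N` have at least `k` upcrossings of `[α, β]`. -/
def upcrossingSet {Y : Type*} (T : Y → Y) (F : Y → ℝ) (N k : ℕ) (α β : ℝ) : Set Y :=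
  {y | Upcrossings N (fun n => birkhoffSum T F n y - n * α) (fun n => birkhoffSum T F n y - n * β)
    0 k}

open scoped Classical in
/-- Bishop's upcrossing inequality for a permutation of a finite set. -/
theorem card_upcrossingSet_le {Y : Type*} [Fintype Y] {T : Y → Y} (hT : Function.Bijective T)
    (F : Y → ℝ) (N k : ℕ) {α β : ℝ} (hαβ : α ≤ β) :
    k * (β - α) * (Finset.univ.filter (· ∈ upcrossingSet T F N k α β)).card ≤
      ∑ y, max (F y - α) 0 := by
  choose Φ hΦ using fun y => TradeChain.exists_isGreatest N
    (fun n => birkhoffSum T F n y - n * α) (fun n => birkhoffSum T F n y - n * β) k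
  have key : ∀ y, (if y ∈ upcrossingSet T F N k α β then k * (β - α) else 0) ≤
      Φ (T y) - Φ y + max (F y - α) 0 := by
    intro y
    have main : ∀ {j : ℕ} {s : ℝ}, j ≤ k → TradeChain N (fun n => birkhoffSum T F n y - n * α)
        (fun n => birkhoffSum T F n y - n * β) 0 j s → Φ y ≤ s →
        j * (β - α) ≤ Φ (T y) - Φ y + max (F y - α) 0 := by
      intro j s hj hc hs
      obtain ⟨j', hj', s', hc', hle⟩ := hc.shift (a := F y - α) (η := β - α)
        (p' := fun n => birkhoffSum T F n (T y) - n * α)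
        (q' := fun n => birkhoffSum T F n (T y) - n * β) (by simp) (by simp) (by simp)
        (fun n => by simp only [birkhoffSum_succ']; push_cast; ring)
        (fun n => by simp only [birkhoffSum_succ']; push_cast; ring)
      have := (hΦ (T y)).2 ⟨j', hj'.trans hj, hc'⟩
      linarith
    obtain ⟨j, hj, hc⟩ := (hΦ y).1
    split_ifs with hy
    · obtain ⟨s', hs', hc'⟩ := hc.exists_of_le hj hy
      exact main le_rfl hc' hs'
    · exact (mul_nonneg j.cast_nonneg (sub_nonneg.2 hαβ)).trans (main hj hc le_rfl)
  have hsum : ∑ y, Φ (T y) = ∑ y, Φ y := hT.sum_comp Φ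
  have := Finset.sum_le_sum fun y (_ : y ∈ Finset.univ) => key y
  rw [Finset.sum_add_distrib, Finset.sum_sub_distrib, hsum, sub_self, zero_add,
    ← Finset.sum_filter, Finset.sum_const, nsmul_eq_mul] at this
  linarith

theorem Upcrossings.of_finset {N : ℕ} {p q : ℕ → ℝ} {m : ℕ → ℕ} (hm : StrictMono m)
    (I : Finset ℕ) : (∀ i ∈ I, m (2 * i + 1) ≤ N ∧ p (m (2 * i)) ≤ 0 ∧ 0 ≤ q (m (2 * i + 1))) →
    ∀ t, (∀ i ∈ I, t ≤ m (2 * i)) → Upcrossings N p q t I.card := by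
  induction I using Finset.induction_on_min with
  | empty => exact fun _ t _ => .nil t
  | insert a I ha ih =>
    intro h t ht
    rw [Finset.card_insert_of_notMem fun h => (ha a h).false]
    obtain ⟨hN, hp, hq⟩ := h a (Finset.mem_insert_self a I)
    refine .cons (ht a (Finset.mem_insert_self a I)) (hm (by omega)) hN hp hq
      (ih (fun i hi => h i (Finset.mem_insert_of_mem hi)) _ fun i hi => hm.monotone ?_)
    have := ha i hi
    omega

theorem birkhoffSum_eq_mul_ergAvg {Y : Type*} (T : Y → Y) (F : Y → ℝ) {n : ℕ} (hn : 1 ≤ n) (y : Y) :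
    birkhoffSum T F n y = n * ergAvg T F n y := by
  have : (n : ℝ) ≠ 0 := by positivity
  rw [ergAvg, birkhoffSum]
  field_simp

theorem ergAvg_const_mul {Y : Type*} (T : Y → Y) (F : Y → ℝ) (c : ℝ) (n : ℕ) (y : Y) :
    ergAvg T (fun z => c * F z) n y = c * ergAvg T F n y := by
  rw [ergAvg, ergAvg, ← Finset.mul_sum]
  ring

theorem exists_mesh_between {h x y : ℝ} (hh : 0 < h) (hxy : x + 2 * h ≤ y) :
    ∃ i : ℤ, x ≤ i * h ∧ (i + 1) * h ≤ y := by
  refine ⟨⌈x / h⌉, (div_le_iff₀ hh).1 (Int.le_ceil _), ?_⟩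
  have := mul_lt_mul_of_pos_right (Int.ceil_lt_add_one (x / h)) hh
  rw [add_mul, div_mul_cancel₀ _ hh.ne'] at this
  linarith

theorem admitsFluct.of_le {s : ℕ → ℝ} {L : ℕ} {ε : ℝ} {j k : ℕ} (h : admitsFluct s L ε k)
    (hjk : j ≤ k) : admitsFluct s L ε j := by
  obtain ⟨m, hm, hL, hε⟩ := h
  exact ⟨m, hm, fun i hi => hL i (by omega), fun i hi => hε i (by omega)⟩

theorem numFluct_le_of_not_admitsFluct {s : ℕ → ℝ} {L : ℕ} {ε : ℝ} {k : ℕ}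
    (h : ¬ admitsFluct s L ε k) : numFluct s L ε ≤ k :=
  csSup_le' fun _ hj => le_of_not_ge fun hkj => h (admitsFluct.of_le hj hkj)

theorem card_sign_mesh (B : ℕ) :
    (({1, -1} : Finset ℝ) ×ˢ Finset.Icc (-B : ℤ) B).card = 2 * (2 * B + 1) := by
  rw [Finset.card_product, Finset.card_pair (by norm_num), Int.card_Icc]
  omega

/-- A point with many `2h`-fluctuations either has a large ergodic average or many upcrossings of
one of finitely many mesh intervals of length `h`, by `F` or by `-F`. -/
theorem mem_upcrossingSet_of_admitsFluct {Y : Type*} {T : Y → Y} {F : Y → ℝ} {L k B : ℕ} {h : ℝ}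
    {y : Y} (hh : 0 < h)
    (hfl : admitsFluct (fun j => ergAvg T F j y) L (2 * h) (2 * (2 * B + 1) * k)) :
    (∃ σ ∈ ({1, -1} : Finset ℝ), y ∈ upcrossingSet T (fun z => σ * F z) L 1 0 (B * h)) ∨
      ∃ x ∈ ({1, -1} : Finset ℝ) ×ˢ Finset.Icc (-B : ℤ) B,
        y ∈ upcrossingSet T (fun z => x.1 * F z) L k (x.2 * h) ((x.2 + 1) * h) := by
  by_contra! hcon
  obtain ⟨hmax, hup⟩ := hcon
  obtain ⟨m, hm, hL, hε⟩ := hfl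
  have hbound : ∀ σ ∈ ({1, -1} : Finset ℝ), ∀ n, 1 ≤ n → n ≤ L → σ * ergAvg T F n y < B * h := by
    intro σ hσ n hn hnL
    by_contra! hge
    refine hmax σ hσ (.cons le_rfl hn hnL (by simp) ?_ (.nil _))
    rw [birkhoffSum_eq_mul_ergAvg _ _ hn, ergAvg_const_mul, sub_nonneg]
    gcongr
  have hcross : ∀ i : ℕ, ∃ x : ℝ × ℤ, i < 2 * (2 * B + 1) * k →
      x ∈ ({1, -1} : Finset ℝ) ×ˢ Finset.Icc (-B : ℤ) B ∧
      x.1 * ergAvg T F (m (2 * i)) y ≤ x.2 * h ∧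
      (x.2 + 1) * h ≤ x.1 * ergAvg T F (m (2 * i + 1)) y := by
    intro i
    by_cases hi : i < 2 * (2 * B + 1) * k
    swap
    · exact ⟨(0, 0), fun h => absurd h hi⟩
    have hu := hL (2 * i) (by omega)
    have hv := hL (2 * i + 1) (by omega)
    obtain ⟨σ, hσ, hd⟩ : ∃ σ ∈ ({1, -1} : Finset ℝ),
        σ * ergAvg T F (m (2 * i)) y + 2 * h ≤ σ * ergAvg T F (m (2 * i + 1)) y := by
      rcases le_abs.1 (hε i hi) with hd | hd
      · exact ⟨-1, by simp, by linarith⟩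
      · exact ⟨1, by simp, by linarith⟩
    obtain ⟨c, hc₁, hc₂⟩ := exists_mesh_between hh hd
    refine ⟨(σ, c), fun _ => ⟨Finset.mk_mem_product hσ (Finset.mem_Icc.2 ⟨?_, ?_⟩), hc₁, hc₂⟩⟩
    · have hneg : -σ ∈ ({1, -1} : Finset ℝ) := by
        rcases Finset.mem_insert.1 hσ with rfl | hσ
        · simp
        · rw [Finset.mem_singleton.1 hσ]
          simp
      have := hbound _ hneg _ hu.1 hu.2
      have hlt : -(B : ℝ) * h < c * h := by linarith
      have := lt_of_mul_lt_mul_right hlt hh.le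
      exact_mod_cast this.le
    · have := hbound _ hσ _ hv.1 hv.2
      have hlt : ((c : ℝ) + 1) * h < B * h := by linarith
      have := lt_of_mul_lt_mul_right hlt hh.le
      have : (c : ℝ) ≤ B := by linarith
      exact_mod_cast this
  choose f hf using hcross
  obtain ⟨x, hx, hk⟩ := Finset.exists_le_card_fiber_of_mul_le_card_of_maps_to
    (s := Finset.range (2 * (2 * B + 1) * k)) (n := k) (f := f)
    (fun i hi => (hf i (Finset.mem_range.1 hi)).1)
    ⟨(1, 0), by simp⟩ (by rw [card_sign_mesh, Finset.card_range])
  refine hup x hx ((Upcrossings.of_finset hm _ ?_ 0 fun _ _ => Nat.zero_le _).of_le hk)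
  intro i hi
  obtain ⟨hmem, rfl⟩ := Finset.mem_filter.1 hi
  have hlt := Finset.mem_range.1 hmem
  obtain ⟨-, h₁, h₂⟩ := hf i hlt
  have hu := hL (2 * i) (by omega)
  have hv := hL (2 * i + 1) (by omega)
  refine ⟨hv.2, ?_, ?_⟩
  · rw [birkhoffSum_eq_mul_ergAvg _ _ hu.1, ergAvg_const_mul, sub_nonpos]
    gcongr
  · rw [birkhoffSum_eq_mul_ergAvg _ _ hv.1, ergAvg_const_mul, sub_nonneg]
    gcongr

open scoped Classical in
/-- Quantitative bound on the number of points with many fluctuations, in terms of the mean of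
`|F|`. -/
theorem card_admitsFluct_le {Y : Type*} [Fintype Y] {T : Y → Y} (hT : Function.Bijective T)
    {F : Y → ℝ} {C h : ℝ} (hC : ∑ y, |F y| ≤ Fintype.card Y * C) (hh : 0 < h) (L : ℕ) {k B : ℕ}
    (hk : 0 < k) (hB : 0 < B) :
    ((Finset.univ.filter fun y => admitsFluct (fun j => ergAvg T F j y) L (2 * h)
      (2 * (2 * B + 1) * k)).card : ℝ) ≤
      Fintype.card Y * (2 * C / (B * h) + 2 * (2 * B + 1) * (C + B * h) / (k * h)) := by
  have hpos : ∀ σ ∈ ({1, -1} : Finset ℝ), ∀ α : ℝ, ∑ y, max (σ * F y - α) 0 ≤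
      Fintype.card Y * (C + |α|) := by
    intro σ hσ α
    calc ∑ y, max (σ * F y - α) 0 ≤ ∑ y, (|F y| + |α|) := by
          refine Finset.sum_le_sum fun y _ => max_le ?_ (by positivity)
          have hσF : σ * F y ≤ |F y| := by
            rcases Finset.mem_insert.1 hσ with rfl | hσ
            · simpa using le_abs_self (F y)
            · rw [Finset.mem_singleton.1 hσ]
              simpa using neg_le_abs (F y)
          have := neg_le_abs α
          linarith
      _ ≤ Fintype.card Y * (C + |α|) := by
          rw [Finset.sum_add_distrib, Finset.sum_const, nsmul_eq_mul, Finset.card_univ]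
          linarith
  have hmaximal : ∀ σ ∈ ({1, -1} : Finset ℝ), ((Finset.univ.filter
      (· ∈ upcrossingSet T (fun z => σ * F z) L 1 0 (B * h))).card : ℝ) ≤
      Fintype.card Y * (C / (B * h)) := by
    intro σ hσ
    have h₁ := (card_upcrossingSet_le hT (fun z => σ * F z) L 1 (α := 0) (β := B * h)
      (by positivity)).trans (hpos σ hσ 0)
    rw [← mul_div_assoc, le_div_iff₀ (by positivity)]
    simp only [Nat.cast_one, sub_zero, abs_zero, add_zero] at h₁
    linarith
  have hmesh : ∀ x ∈ ({1, -1} : Finset ℝ) ×ˢ Finset.Icc (-B : ℤ) B, ((Finset.univ.filter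
      (· ∈ upcrossingSet T (fun z => x.1 * F z) L k (x.2 * h) ((x.2 + 1) * h))).card : ℝ) ≤
      Fintype.card Y * ((C + B * h) / (k * h)) := by
    intro x hx
    obtain ⟨hσ, hc⟩ := Finset.mem_product.1 hx
    have h₁ := (card_upcrossingSet_le hT (fun z => x.1 * F z) L k (α := x.2 * h)
      (β := (x.2 + 1) * h) (by linarith)).trans (hpos _ hσ _)
    have habs : |(x.2 : ℝ) * h| ≤ B * h := by
      rw [abs_mul, abs_of_pos hh]
      have : |x.2| ≤ (B : ℤ) := abs_le.2 (Finset.mem_Icc.1 hc)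
      gcongr
      exact_mod_cast this
    have h₂ : (Fintype.card Y : ℝ) * (C + |(x.2 : ℝ) * h|) ≤ Fintype.card Y * (C + B * h) := by
      gcongr
    rw [← mul_div_assoc, le_div_iff₀ (by positivity)]
    linarith
  have hsub : (Finset.univ.filter fun y => admitsFluct (fun j => ergAvg T F j y) L (2 * h)
      (2 * (2 * B + 1) * k)) ⊆
      (({1, -1} : Finset ℝ).biUnion fun σ => Finset.univ.filter
        (· ∈ upcrossingSet T (fun z => σ * F z) L 1 0 (B * h))) ∪
      ((({1, -1} : Finset ℝ) ×ˢ Finset.Icc (-B : ℤ) B).biUnion fun x => Finset.univ.filter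
        (· ∈ upcrossingSet T (fun z => x.1 * F z) L k (x.2 * h) ((x.2 + 1) * h))) := by
    intro y hy
    rw [Finset.mem_union, Finset.mem_biUnion, Finset.mem_biUnion]
    simpa only [Finset.mem_filter_univ] using
      mem_upcrossingSet_of_admitsFluct hh ((Finset.mem_filter_univ y).1 hy)
  have hle := (Finset.card_le_card hsub).trans ((Finset.card_union_le _ _).trans
    (add_le_add Finset.card_biUnion_le Finset.card_biUnion_le))
  have hle' := (Nat.cast_le (α := ℝ)).2 hle
  push_cast at hle'
  have h₁ := Finset.sum_le_sum hmaximal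
  have h₂ := Finset.sum_le_sum hmesh
  have hcard : ((({1, -1} : Finset ℝ) ×ˢ Finset.Icc (-B : ℤ) B).card : ℝ) = 2 * (2 * B + 1) := by
    rw [card_sign_mesh]
    push_cast
    ring
  rw [Finset.sum_const, nsmul_eq_mul, Finset.card_pair (by norm_num)] at h₁
  rw [Finset.sum_const, nsmul_eq_mul, hcard] at h₂
  refine hle'.trans ((add_le_add h₁ h₂).trans (le_of_eq ?_))
  push_cast
  ring

open scoped Classical in
theorem sum_abs_le_card_mul {Y : Type*} [Fintype Y] [Nonempty Y] {F : Y → ℝ} {k η : ℝ} (hk : 0 ≤ k)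
    (h : (1 / (Fintype.card Y : ℝ)) *
      ∑ x ∈ Finset.univ.filter (fun x : Y => k < |F x|), |F x| ≤ η) :
    ∑ y, |F y| ≤ Fintype.card Y * (k + η) := by
  have hM : (0 : ℝ) < Fintype.card Y := by exact_mod_cast Fintype.card_pos
  rw [one_div_mul_eq_div, div_le_iff₀ hM] at h
  have hle : ∑ y, |F y| ≤ ∑ y, (k + if k < |F y| then |F y| else 0) := by
    refine Finset.sum_le_sum fun y _ => ?_
    split_ifs with hy
    · linarith
    · linarith
  rw [Finset.sum_add_distrib, ← Finset.sum_filter, Finset.sum_const, nsmul_eq_mul,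
    Finset.card_univ] at hle
  linarith

open scoped Classical in
/-- Standard sequence version of Kachurovskii's fluctuation theorem: for a sequence of
finite sets `Y n` with `|Y n| = M n → ∞`, transitive permutations `T n`, and a uniformly
integrable sequence `F n`, for all `ε, δ > 0` there exist `N` and `k` such that for all
`n > N`, the proportion of points whose sequence of ergodic averages
`(A_j(F n,T n,y))_{j=1}^{M n}` has at most `k` `ε`-fluctuations is at least `1 − δ`. -/
theorem fluctuation_theorem_sequence_version
    (Y : ℕ → Type*) [∀ n, Fintype (Y n)] [∀ n, Nonempty (Y n)]
    (hMtop : Tendsto (fun n => Fintype.card (Y n)) atTop atTop)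
    (T : ∀ n, Y n → Y n) (hT : ∀ n, Function.Bijective (T n))
    (htrans : ∀ n, ∃ x : Y n, ∀ y : Y n, ∃ i : ℕ, (T n)^[i] x = y)
    (F : ∀ n, Y n → ℝ)
    (hUI : ∀ ε > (0 : ℝ), ∃ n₀ k₀ : ℕ, ∀ n ≥ n₀, ∀ k ≥ k₀,
      (1 / (Fintype.card (Y n) : ℝ)) *
        ∑ x ∈ Finset.univ.filter (fun x : Y n => (k : ℝ) < |F n x|), |F n x| < ε) :
    ∀ ε > (0 : ℝ), ∀ δ > (0 : ℝ), ∃ N k : ℕ, ∀ n > N,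
      1 - δ ≤ (1 / (Fintype.card (Y n) : ℝ)) *
        ((Finset.univ.filter (fun y : Y n =>
          numFluct (fun j => ergAvg (T n) (F n) j y) (Fintype.card (Y n)) ε ≤ k)).card : ℝ) := by
  intro ε hε δ hδ
  obtain ⟨n₀, k₀, hk₀⟩ := hUI 1 one_pos
  set C : ℝ := k₀ + 1 with hC
  have hCpos : 0 < C := by positivity
  set h : ℝ := ε / 2 with hh
  have hhpos : 0 < h := by positivity
  obtain ⟨B, hB⟩ := exists_nat_gt (4 * C / (δ * h))
  have hBpos : 0 < B := by
    have : (0 : ℝ) < B := lt_trans (by positivity) hB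
    exact_mod_cast this
  obtain ⟨k, hk⟩ := exists_nat_gt (4 * (2 * B + 1) * (C + B * h) / (δ * h))
  have hkpos : 0 < k := by
    have : (0 : ℝ) < k := lt_trans (by positivity) hk
    exact_mod_cast this
  refine ⟨n₀, 2 * (2 * B + 1) * k, fun n hn => ?_⟩
  have hM : (0 : ℝ) < Fintype.card (Y n) := by exact_mod_cast Fintype.card_pos
  have hbad := card_admitsFluct_le (hT n)
    (sum_abs_le_card_mul k₀.cast_nonneg (hk₀ n hn.le k₀ le_rfl).le) hhpos (Fintype.card (Y n))
    hkpos hBpos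
  have h₁ : 2 * C / (B * h) ≤ δ / 2 := by
    rw [div_lt_iff₀ (by positivity)] at hB
    rw [div_le_iff₀ (by positivity)]
    linarith
  have h₂ : 2 * (2 * B + 1) * (C + B * h) / (k * h) ≤ δ / 2 := by
    rw [div_lt_iff₀ (by positivity)] at hk
    rw [div_le_iff₀ (by positivity)]
    linarith
  have hbad' := hbad.trans (mul_le_mul_of_nonneg_left
    ((add_le_add h₁ h₂).trans (add_halves δ).le) hM.le)
  rw [hh, mul_div_cancel₀ ε two_ne_zero] at hbad'
  have hcompl := Finset.card_filter_add_card_filter_not (s := (Finset.univ : Finset (Y n)))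
    (fun y => admitsFluct (fun j => ergAvg (T n) (F n) j y) (Fintype.card (Y n)) ε
      (2 * (2 * B + 1) * k))
  have hgood := Finset.card_le_card (Finset.monotone_filter_right (Finset.univ : Finset (Y n))
    (fun y _ (hy : ¬ admitsFluct (fun j => ergAvg (T n) (F n) j y) (Fintype.card (Y n)) ε
      (2 * (2 * B + 1) * k)) => numFluct_le_of_not_admitsFluct hy))
  rw [Finset.card_univ] at hcompl
  have hcompl' := congrArg (Nat.cast (R := ℝ)) hcompl
  have hgood' := (Nat.cast_le (α := ℝ)).2 hgood
  push_cast at hcompl'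
  rw [one_div_mul_eq_div, le_div_iff₀ hM]
  linarith
end

section
/- For every sequence f : ℕ → ℝ* of hyperreal numbers such that f(n) is infinite positive for every n ∈ ℕ, there exists a hyperreal number ω that is infinite positive and satisfies ω < f(n) for all n ∈ ℕ. -/
open Filter in
/-- Diagonalization: if `l ≤ atTop` and each `p k` holds eventually along `l`, then some
`h : ℕ → ℕ` tends to infinity along `l` and eventually satisfies `p (h i) i`. -/
theorem exists_tendsto_atTop_eventually_of_forall_eventually {l : Filter ℕ} (hl : l ≤ atTop)
    {p : ℕ → ℕ → Prop} (hp : ∀ k, ∀ᶠ i in l, p k i) :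
    ∃ h : ℕ → ℕ, Tendsto h l atTop ∧ ∀ᶠ i in l, p (h i) i := by
  classical
  refine ⟨fun i => Nat.findGreatest (p · i) i, tendsto_atTop.2 fun k => ?_, ?_⟩
  · filter_upwards [hp k, hl (eventually_ge_atTop k)] with i hi hki
    exact Nat.le_findGreatest hki hi
  · filter_upwards [hp 0] with i hi
    exact Nat.findGreatest_spec (P := (p · i)) (Nat.zero_le i) hi

/-- For every sequence of infinite positive hyperreals `f : ℕ → ℝ*` there exists an
infinite positive hyperreal `ω` below all of them. -/
theorem exists_infinitePos_lt_of_forall_infinitePos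
    (f : ℕ → Hyperreal) (hf : ∀ n, (f n).InfinitePos) :
    ∃ ω : Hyperreal, ω.InfinitePos ∧ ∀ n, ω < f n := by
  choose g hg using fun n => Hyperreal.ofSeq_surjective (f n)
  have hgt (n : ℕ) (r : ℝ) : ∀ᶠ i in Filter.hyperfilter ℕ, r < g n i := by
    have h : Hyperreal.ofSeq (fun _ => r) < Hyperreal.ofSeq (g n) := by
      rw [hg n]
      exact hf n r
    exact Hyperreal.ofSeq_lt_ofSeq.1 h
  obtain ⟨h, h_top, h_lt⟩ := exists_tendsto_atTop_eventually_of_forall_eventually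
    Nat.hyperfilter_le_atTop (p := fun k i => ∀ n ≤ k, (k : ℝ) < g n i)
    fun k => (Set.finite_Iic k).eventually_all.2 fun n _ => hgt n k
  refine ⟨Hyperreal.ofSeq fun i => h i, fun r => ?_, fun n => ?_⟩
  · exact Hyperreal.ofSeq_lt_ofSeq.2
      ((tendsto_natCast_atTop_atTop.comp h_top).eventually_gt_atTop r)
  · rw [← hg n]
    refine Hyperreal.ofSeq_lt_ofSeq.2 ?_
    filter_upwards [h_lt, h_top.eventually_ge_atTop n] with i hi hni
    exact hi n hni
end

section
/- Let (X, ρ) be a compact metric space and ν a Borel probability measure on X such that every open ball of positive radius has positive ν-measure and every Borel set of positive ν-measure is infinite. Let τ : X → X be a ν-measure-preserving transformation whose set D_τ of points of continuity satisfies ν(D_τ) = 1. Then there exist a sequence of finite nonempty subsets Y_n ⊆ X and permutations T_n : Y_n → Y_n, each of which is a transitive permutation (a single cycle of length |Y_n|), such that: (a) the empirical measures δ_{Y_n} = (1/|Y_n|)·Σ_{y ∈ Y_n} δ_y converge to ν in the weak-* topology; and (b) for every ε > 0, lim_{n→∞} (1/|Y_n|)·|{y ∈ Y_n : ρ(T_n(y),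 τ(y)) > ε}| = 0. -/
open MeasureTheory Filter Topology ProbabilityTheory

/-- Finitely many infinite sets, taken from a sequence, admit a choice of distinct
representatives. -/
lemma exists_injOn_forall_mem_of_infinite {X : Type*} (S : ℕ → Set X)
    (hS : ∀ m, (S m).Infinite) (N : ℕ) :
    ∃ x : ℕ → X, Set.InjOn x (Set.Iio N) ∧ ∀ m < N, x m ∈ S m := by
  induction N with
  | zero =>
    obtain ⟨a, -⟩ := (hS 0).nonempty
    exact ⟨fun _ => a, by simp [Set.InjOn], by simp⟩
  | succ N ih =>
    obtain ⟨x, hx, hxS⟩ := ih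
    obtain ⟨a, haS, ha⟩ := (hS N).exists_notMem_finite ((Set.finite_Iio N).image x)
    have hne : ∀ m < N, x m ≠ a := fun m hm h => ha ⟨m, hm, h⟩
    refine ⟨Function.update x N a, ?_, ?_⟩
    · intro i hi j hj hij
      simp only [Set.mem_Iio] at hi hj
      rcases Nat.lt_succ_iff_lt_or_eq.1 hi with hi | rfl <;>
        rcases Nat.lt_succ_iff_lt_or_eq.1 hj with hj | rfl
      · rw [Function.update_of_ne hi.ne, Function.update_of_ne hj.ne] at hij
        exact hx hi hj hij
      · rw [Function.update_of_ne hi.ne, Function.update_self] at hij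
        exact absurd hij (hne i hi)
      · rw [Function.update_of_ne hj.ne, Function.update_self] at hij
        exact absurd hij.symm (hne j hj)
      · rfl
    · intro m hm
      rcases Nat.lt_succ_iff_lt_or_eq.1 hm with hm | rfl
      · rw [Function.update_of_ne hm.ne]
        exact hxS m hm
      · rwa [Function.update_self]

/-- An enumeration without repetition of a finite set carries the cyclic permutation sending
each point to the next one. -/
lemma exists_cyclic_permutation_of_injOn {X : Type*} [DecidableEq X] {N : ℕ} (hN : 0 < N)
    (x : ℕ → X) (hx : Set.InjOn x (Set.Iio N)) :
    ∃ T : X → X, (∀ m < N, T (x m) = x ((m + 1) % N)) ∧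
      Set.BijOn T ↑((Finset.range N).image x) ↑((Finset.range N).image x) ∧
      ∃ a ∈ (Finset.range N).image x, ∀ y ∈ (Finset.range N).image x,
        ∃ i : ℕ, T^[i] a = y := by
  have : Nonempty X := ⟨x 0⟩
  set T : X → X := fun y => x ((Function.invFunOn x (Set.Iio N) y + 1) % N) with hTdef
  have hT : ∀ m < N, T (x m) = x ((m + 1) % N) := fun m hm => by
    rw [hTdef]
    simp only [hx.leftInvOn_invFunOn (show m ∈ Set.Iio N from hm)]
  have hiter : ∀ i < N, T^[i] (x 0) = x i := by
    intro i
    induction i with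
    | zero => simp
    | succ i ih =>
      intro hi
      rw [Function.iterate_succ_apply', ih (by omega), hT i (by omega), Nat.mod_eq_of_lt hi]
  have hmaps : Set.MapsTo T ↑((Finset.range N).image x) ↑((Finset.range N).image x) := by
    intro y hy
    simp only [Finset.coe_image, Finset.coe_range, Set.mem_image, Set.mem_Iio] at hy ⊢
    obtain ⟨m, hm, rfl⟩ := hy
    exact ⟨(m + 1) % N, Nat.mod_lt _ hN, (hT m hm).symm⟩
  have hsurj : Set.SurjOn T ↑((Finset.range N).image x) ↑((Finset.range N).image x) := by
    intro y hy
    simp only [Finset.coe_image, Finset.coe_range, Set.mem_image, Set.mem_Iio,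
      exists_exists_and_eq_and] at hy ⊢
    obtain ⟨m, hm, rfl⟩ := hy
    rcases m with _ | m
    · exact ⟨N - 1, by omega, by rw [hT _ (by omega), Nat.sub_add_cancel hN, Nat.mod_self]⟩
    · exact ⟨m, by omega, by rw [hT _ (by omega), Nat.mod_eq_of_lt hm]⟩
  refine ⟨T, hT, ⟨hmaps, Finset.injOn_of_surjOn_of_card_le T hmaps hsurj le_rfl, hsurj⟩,
    x 0, Finset.mem_image_of_mem x (Finset.mem_range.2 hN), ?_⟩
  intro y hy
  obtain ⟨m, hm, rfl⟩ := Finset.mem_image.1 hy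
  exact ⟨m, hiter m (Finset.mem_range.1 hm)⟩

/-- A sequence of points satisfying an almost sure property along which the averages of
countably many given integrable functions converge to their integrals. -/
lemma exists_seq_tendsto_average {X ι : Type*} [MeasurableSpace X] [Countable ι]
    (ν : Measure X) [IsProbabilityMeasure ν] (g : ι → X → ℝ) (hg : ∀ j, Measurable (g j))
    (hgi : ∀ j, Integrable (g j) ν) {p : X → Prop} (hp : ∀ᵐ x ∂ν, p x) :
    ∃ z : ℕ → X, (∀ m, p (z m)) ∧ ∀ j,
      Tendsto (fun n : ℕ => (∑ m ∈ Finset.range n, g j (z m)) / n) atTop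
        (𝓝 (∫ x, g j x ∂ν)) := by
  obtain ⟨Ω, _, P, Z, hZ, hlaw, hindep, _⟩ := exists_iid ℕ ν
  have hmp : ∀ m, MeasurePreserving (Z m) P ν := fun m => ⟨hZ m, (hlaw m).map_eq⟩
  have h₁ : ∀ᵐ ω ∂P, ∀ m, p (Z m ω) :=
    ae_all_iff.2 fun m => (hmp m).quasiMeasurePreserving.ae hp
  have h₂ : ∀ᵐ ω ∂P, ∀ j,
      Tendsto (fun n : ℕ => (∑ m ∈ Finset.range n, g j (Z m ω)) / n) atTop
        (𝓝 (∫ x, g j x ∂ν)) := by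
    refine ae_all_iff.2 fun j => ?_
    have hmean : ∫ ω, g j (Z 0 ω) ∂P = ∫ x, g j x ∂ν := by
      rw [← (hlaw 0).map_eq, integral_map (hZ 0).aemeasurable (hg j).aestronglyMeasurable]
    rw [← hmean]
    refine strong_law_ae_real (fun m ω => g j (Z m ω)) ?_ ?_ ?_
    · exact (hmp 0).integrable_comp_of_integrable (hgi j)
    · intro a b hab
      exact (hindep.indepFun hab).comp (hg j) (hg j)
    · intro m
      refine IdentDistrib.comp ⟨(hZ m).aemeasurable, (hZ 0).aemeasurable, ?_⟩ (hg j)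
      rw [(hlaw m).map_eq, (hlaw 0).map_eq]
  obtain ⟨ω, hω₁, hω₂⟩ := (h₁.and h₂).exists
  exact ⟨fun m => Z m ω, hω₁, hω₂⟩

/-- For almost every point `z`, the points `x` such that `x` is close to `z` and `τ x` is
close to `τ z` form a set of positive measure. -/
lemma ae_forall_measure_pos_of_measurable {X : Type*} [PseudoMetricSpace X]
    [SecondCountableTopology X] [MeasurableSpace X] [BorelSpace X] (ν : Measure X)
    {τ : X → X} (hτ : Measurable τ) :
    ∀ᵐ z ∂ν, ∀ r > (0 : ℝ), 0 < ν {x | dist x z < r ∧ dist (τ x) (τ z) < r} := by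
  have hpair : Measurable fun x => (x, τ x) := measurable_id.prodMk hτ
  have h : ∀ᵐ q ∂(ν.map fun x => (x, τ x)), q ∈ (ν.map fun x => (x, τ x)).support :=
    Measure.support_mem_ae
  filter_upwards [ae_of_ae_map hpair.aemeasurable h] with z hz r hr
  have := (Measure.mem_support_iff_forall _).1 hz _ (Metric.ball_mem_nhds _ hr)
  rw [Measure.map_apply hpair Metric.isOpen_ball.measurableSet] at this
  convert this using 2
  ext x
  simp [Prod.dist_eq]

lemma sum_range_mul_div_mod (f : ℕ → ℕ → ℝ) (M K : ℕ) :
    ∑ m ∈ Finset.range (M * K), f (m / K) (m % K) =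
      ∑ s ∈ Finset.range K, ∑ q ∈ Finset.range M, f q s := by
  rw [Finset.sum_comm]
  induction M with
  | zero => simp
  | succ M ih =>
    rw [Nat.succ_mul, Finset.sum_range_add, ih, Finset.sum_range_succ]
    congr 1
    refine Finset.sum_congr rfl fun s hs => ?_
    have hs := Finset.mem_range.1 hs
    rw [Nat.mul_comm M K, Nat.mul_add_div (by omega), Nat.div_eq_of_lt hs, Nat.mul_add_mod,
      Nat.mod_eq_of_lt hs, add_zero]

lemma card_filter_range_mul_succ_mod_eq_zero_le (M K : ℕ) :
    ((Finset.range (M * K)).filter fun m => (m + 1) % K = 0).card ≤ M := by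
  rcases Nat.eq_zero_or_pos K with rfl | hK
  · simp
  conv_rhs => rw [← Finset.card_range M]
  refine Finset.card_le_card_of_injOn (fun m => m / K) ?_ ?_
  · intro m hm
    simp only [Finset.coe_filter, Finset.mem_range, Set.mem_ofPred_eq] at hm
    simpa using Nat.div_lt_of_lt_mul (by rw [mul_comm]; exact hm.1)
  · intro a ha b hb hab
    simp only [Finset.coe_filter, Finset.mem_range, Set.mem_ofPred_eq] at ha hb hab
    obtain ⟨u, hu⟩ := Nat.dvd_of_mod_eq_zero ha.2
    obtain ⟨v, hv⟩ := Nat.dvd_of_mod_eq_zero hb.2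
    have h : ∀ {c w : ℕ}, c + 1 = K * w → c / K + 1 = w := by
      intro c w hc
      rw [← Nat.add_div_right c hK]
      rcases w with _ | w
      · omega
      · rw [Nat.mul_succ] at hc
        rw [Nat.div_eq_of_lt_le] <;> grind
    have := h hu
    have := h hv
    grind

lemma Continuous.integrable_of_isFiniteMeasure {X : Type*} [TopologicalSpace X] [CompactSpace X]
    [MeasurableSpace X] [OpensMeasurableSpace X] {ν : Measure X} [IsFiniteMeasure ν] {f : X → ℝ}
    (hf : Continuous f) : Integrable f ν :=
  hf.integrable_of_hasCompactSupport (HasCompactSupport.of_compactSpace f)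

/-- A long finite sequence of distinct points whose empirical measure nearly integrates
finitely many continuous functions, and along which the cyclic shift is mostly close to `τ`. -/
lemma exists_injOn_approximation {X : Type*} [MetricSpace X] [CompactSpace X]
    [MeasurableSpace X] [BorelSpace X] (ν : Measure X) [IsProbabilityMeasure ν]
    (hinf : ∀ s : Set X, MeasurableSet s → 0 < ν s → s.Infinite)
    {τ : X → X} (hτ : MeasurePreserving τ ν ν) (F : Finset C(X, ℝ)) {ε : ℝ} (hε : 0 < ε) :
    ∃ (N : ℕ) (x : ℕ → X), 0 < N ∧ Set.InjOn x (Set.Iio N) ∧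
      (∀ f ∈ F, |∑ m ∈ Finset.range N, f (x m) - N * ∫ y, f y ∂ν| ≤ ε * N) ∧
      (((Finset.range N).filter
        fun m => ε < dist (x ((m + 1) % N)) (τ (x m))).card : ℝ) ≤ ε * N := by
  obtain ⟨K, hK⟩ := exists_nat_gt (1 / ε)
  have hK0 : (0 : ℝ) < K := (by positivity : (0 : ℝ) < 1 / ε).trans hK
  have hKpos : 0 < K := by exact_mod_cast hK0
  have hKε : 1 ≤ ε * K := by
    rw [div_lt_iff₀ hε] at hK
    linarith
  obtain ⟨r, hr, hrε, hrF⟩ : ∃ r > 0, 2 * r ≤ ε ∧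
      ∀ f ∈ F, ∀ a b : X, dist a b < r → |f a - f b| ≤ ε / 2 := by
    have huc : ∀ᶠ r in 𝓝[>] (0 : ℝ), ∀ f ∈ F, ∀ a b : X, dist a b < r →
        |f a - f b| ≤ ε / 2 := by
      refine (Filter.eventually_all_finset F).2 fun f _ => ?_
      obtain ⟨d, hd, hdf⟩ := Metric.uniformContinuous_iff.1
        (CompactSpace.uniformContinuous_of_continuous f.continuous) (ε / 2) (by positivity)
      filter_upwards [Ioo_mem_nhdsGT hd] with r hr a b hab
      exact (hdf (hab.trans hr.2)).le
    obtain ⟨r, hrF, hr⟩ := (huc.and (Ioo_mem_nhdsGT (half_pos hε))).exists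
    exact ⟨r, hr.1, by linarith [hr.2], hrF⟩
  have hiter : ∀ i, MeasurePreserving τ^[i] ν ν := hτ.iterate
  have hgood : ∀ᵐ z ∂ν, ∀ i : ℕ,
      0 < ν {x | dist x (τ^[i] z) < r ∧ dist (τ x) (τ (τ^[i] z)) < r} :=
    ae_all_iff.2 fun i => (hiter i).quasiMeasurePreserving.ae
      ((ae_forall_measure_pos_of_measurable ν hτ.measurable).mono fun z hz => hz r hr)
  obtain ⟨z, hz, hlim⟩ := exists_seq_tendsto_average ν
    (fun (j : F × ℕ) y => j.1.1 (τ^[j.2] y))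
    (fun j => j.1.1.continuous.measurable.comp (hiter j.2).measurable)
    (fun j => (hiter j.2).integrable_comp_of_integrable j.1.1.continuous.integrable_of_isFiniteMeasure) hgood
  have hmean : ∀ (f : C(X, ℝ)) (i : ℕ), ∫ y, f (τ^[i] y) ∂ν = ∫ y, f y ∂ν := fun f i => by
    conv_rhs => rw [← (hiter i).map_eq]
    rw [integral_map (hiter i).measurable.aemeasurable
      f.continuous.measurable.aestronglyMeasurable]
  obtain ⟨M, hM, hMpos⟩ : ∃ M : ℕ, (∀ f ∈ F, ∀ i ∈ Finset.range K,
      |∑ q ∈ Finset.range M, f (τ^[i] (z q)) - M * ∫ y, f y ∂ν| ≤ ε / 2 * M) ∧ 0 < M := by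
    have hev : ∀ᶠ M : ℕ in atTop, ∀ f ∈ F, ∀ i ∈ Finset.range K,
        |∑ q ∈ Finset.range M, f (τ^[i] (z q)) - M * ∫ y, f y ∂ν| ≤ ε / 2 * M := by
      refine (Filter.eventually_all_finset F).2 fun f hf =>
        (Filter.eventually_all_finset _).2 fun i _ => ?_
      have := hlim (⟨f, hf⟩, i)
      simp only [hmean] at this
      filter_upwards [Metric.tendsto_nhds.1 this (ε / 2) (by positivity),
        eventually_gt_atTop 0] with M hM hMpos
      have hM0 : (0 : ℝ) < M := by exact_mod_cast hMpos
      rw [Real.dist_eq] at hM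
      calc _ = |(∑ q ∈ Finset.range M, f (τ^[i] (z q))) / M - ∫ y, f y ∂ν| * M := by
            rw [← abs_of_pos hM0, ← abs_mul, abs_of_pos hM0]
            congr 1
            field_simp
        _ ≤ _ := by gcongr
    exact (hev.and (eventually_gt_atTop 0)).exists
  have hmeas : ∀ a : X, MeasurableSet {x | dist x a < r ∧ dist (τ x) (τ a) < r} := fun a =>
    Metric.isOpen_ball.measurableSet.inter
      (hτ.measurable (Metric.isOpen_ball (x := τ a) (ε := r)).measurableSet)
  set w : ℕ → X := fun m => τ^[m % K] (z (m / K)) with hw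
  obtain ⟨x, hxinj, hxw⟩ := exists_injOn_forall_mem_of_infinite
    (fun m => {x | dist x (w m) < r ∧ dist (τ x) (τ (w m)) < r})
    (fun m => hinf _ (hmeas (w m)) (hz (m / K) (m % K))) (M * K)
  refine ⟨M * K, x, Nat.mul_pos hMpos hKpos, hxinj, fun f hf => ?_, ?_⟩
  · have h₁ : |∑ m ∈ Finset.range (M * K), f (x m) - ∑ m ∈ Finset.range (M * K), f (w m)| ≤
        (M * K) * (ε / 2) := by
      rw [← Finset.sum_sub_distrib]
      refine (Finset.abs_sum_le_sum_abs _ _).trans ?_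
      refine (Finset.sum_le_card_nsmul _ _ (ε / 2) fun m hm => ?_).trans_eq (by simp)
      exact hrF f hf _ _ (hxw m (Finset.mem_range.1 hm)).1
    have h₂ : |∑ m ∈ Finset.range (M * K), f (w m) - (M * K) * ∫ y, f y ∂ν| ≤
        K * (ε / 2 * M) := by
      have hsplit : ∑ m ∈ Finset.range (M * K), f (w m) - (M * K) * ∫ y, f y ∂ν =
          ∑ s ∈ Finset.range K,
            (∑ q ∈ Finset.range M, f (τ^[s] (z q)) - M * ∫ y, f y ∂ν) := by
        rw [Finset.sum_sub_distrib, ← sum_range_mul_div_mod fun q s => f (τ^[s] (z q))]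
        simp only [hw, Finset.sum_const, Finset.card_range, nsmul_eq_mul]
        ring
      rw [hsplit]
      refine (Finset.abs_sum_le_sum_abs _ _).trans ?_
      exact (Finset.sum_le_card_nsmul _ _ _ (hM f hf)).trans_eq (by simp)
    push_cast
    calc _ ≤ _ := abs_sub_le _ (∑ m ∈ Finset.range (M * K), f (w m)) _
      _ ≤ (M * K) * (ε / 2) + K * (ε / 2 * M) := add_le_add h₁ h₂
      _ = _ := by ring
  · have hsub : ((Finset.range (M * K)).filter
          fun m => ε < dist (x ((m + 1) % (M * K))) (τ (x m))) ⊆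
        (Finset.range (M * K)).filter fun m => (m + 1) % K = 0 := by
      intro m hm
      simp only [Finset.mem_filter, Finset.mem_range] at hm ⊢
      refine ⟨hm.1, ?_⟩
      by_contra hne
      have hlt : m + 1 < M * K := by
        refine lt_of_le_of_ne hm.1 fun h => hne ?_
        rw [h, Nat.mul_mod_left]
      have hnext : w (m + 1) = τ (w m) := by
        have hdiv : (m + 1) / K = m / K :=
          Nat.succ_div_of_not_dvd fun h => hne (Nat.mod_eq_zero_of_dvd h)
        have hmod : (m + 1) % K = m % K + 1 := by
          have h₁ := Nat.div_add_mod (m + 1) K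
          have h₂ := Nat.div_add_mod m K
          rw [hdiv] at h₁
          omega
        simp only [hw]
        rw [hdiv, hmod, Function.iterate_succ_apply']
      have h₁ := (hxw (m + 1) hlt).1
      have h₂ := (hxw m hm.1).2
      have h₃ := hm.2
      rw [Nat.mod_eq_of_lt hlt] at h₃
      rw [hnext] at h₁
      linarith [dist_triangle_right (x (m + 1)) (τ (x m)) (τ (w m))]
    have hcard : (((Finset.range (M * K)).filter
        fun m => ε < dist (x ((m + 1) % (M * K))) (τ (x m))).card : ℝ) ≤ M := by
      exact_mod_cast (Finset.card_le_card hsub).trans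
        (card_filter_range_mul_succ_mod_eq_zero_le M K)
    push_cast
    nlinarith [(Nat.cast_nonneg M : (0 : ℝ) ≤ M)]

open scoped Classical in
/-- Existence of finite approximations of a dynamical system: for a compact metric space
`X` with a Borel probability measure `ν` (balls of positive radius have positive measure,
positive-measure sets are infinite) and a measure-preserving transformation `τ` whose set
of continuity points has full measure, there are finite nonempty subsets `Y n ⊆ X` and
transitive permutations `T n` of `Y n` such that the empirical measures of `Y n` converge
to `ν` weak-* and the proportion of `y ∈ Y n` with `ρ(T n y, τ y) > ε` tends to `0` for
every `ε > 0`. -/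
theorem exists_finite_approximation_of_dynamical_system
    {X : Type*} [MetricSpace X] [CompactSpace X] [MeasurableSpace X] [BorelSpace X]
    (ν : Measure X) [IsProbabilityMeasure ν]
    (hball : ∀ (x : X) (r : ℝ), 0 < r → 0 < ν (Metric.ball x r))
    (hinf : ∀ s : Set X, MeasurableSet s → 0 < ν s → s.Infinite)
    (τ : X → X) (hτ : MeasurePreserving τ ν ν)
    (hcont : ν {x | ContinuousAt τ x} = 1) :
    ∃ (Y : ℕ → Finset X) (T : ℕ → X → X),
      (∀ n, (Y n).Nonempty) ∧
      (∀ n, Set.BijOn (T n) ↑(Y n) ↑(Y n)) ∧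
      (∀ n, ∃ x ∈ Y n, ∀ y ∈ Y n, ∃ i : ℕ, (T n)^[i] x = y) ∧
      (∀ f : X → ℝ, Continuous f →
        Tendsto (fun n => (1 / ((Y n).card : ℝ)) * ∑ y ∈ Y n, f y) atTop
          (𝓝 (∫ x, f x ∂ν))) ∧
      (∀ ε > (0 : ℝ),
        Tendsto (fun n => (1 / ((Y n).card : ℝ)) *
            (((Y n).filter (fun y => ε < dist (T n y) (τ y))).card : ℝ))
          atTop (𝓝 0)) := by
  have hstep : ∀ n : ℕ, ∃ (N : ℕ) (x : ℕ → X), 0 < N ∧ Set.InjOn x (Set.Iio N) ∧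
      (∀ f ∈ (Finset.range (n + 1)).image (TopologicalSpace.denseSeq C(X, ℝ)),
        |∑ m ∈ Finset.range N, f (x m) - N * ∫ y, f y ∂ν| ≤ 1 / ((n : ℝ) + 1) * N) ∧
      (((Finset.range N).filter
        fun m => 1 / ((n : ℝ) + 1) < dist (x ((m + 1) % N)) (τ (x m))).card : ℝ) ≤
          1 / ((n : ℝ) + 1) * N :=
    fun n => exists_injOn_approximation ν hinf hτ _ Nat.one_div_pos_of_nat
  choose N x hN hx hxF hxτ using hstep
  choose T hT hbij htrans using fun n => exists_cyclic_permutation_of_injOn (hN n) (x n) (hx n)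
  have hN0 : ∀ n, (0 : ℝ) < N n := fun n => by exact_mod_cast hN n
  have hinj : ∀ n, Set.InjOn (x n) ↑(Finset.range (N n)) := fun n => by
    rw [Finset.coe_range]
    exact hx n
  have hcard : ∀ n, ((Finset.range (N n)).image (x n)).card = N n := fun n => by
    rw [Finset.card_image_of_injOn (hinj n), Finset.card_range]
  refine ⟨fun n => (Finset.range (N n)).image (x n), T, fun n => ?_, hbij, htrans,
    fun f hf => ?_, fun ε hε => ?_⟩
  · exact (Finset.nonempty_range_iff.2 (hN n).ne').image _
  · simp only [hcard]
    rw [Metric.tendsto_atTop]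
    intro ε hε
    obtain ⟨j, hj⟩ := (TopologicalSpace.denseRange_denseSeq C(X, ℝ)).exists_dist_lt
      ⟨f, hf⟩ (show 0 < ε / 3 by positivity)
    set g := TopologicalSpace.denseSeq C(X, ℝ) j
    have hfg : ∀ y, |f y - g y| ≤ ε / 3 := fun y =>
      (ContinuousMap.dist_apply_le_dist (f := (⟨f, hf⟩ : C(X, ℝ))) (g := g) y).trans hj.le
    obtain ⟨n₀, hn₀⟩ := exists_nat_one_div_lt (show 0 < ε / 3 by positivity)
    refine ⟨max j n₀, fun n hn => ?_⟩
    have hjn : j ≤ n := (le_max_left _ _).trans hn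
    have hn₀n : n₀ ≤ n := (le_max_right _ _).trans hn
    have hsmall : 1 / ((n : ℝ) + 1) < ε / 3 :=
      (Nat.one_div_le_one_div hn₀n).trans_lt hn₀
    have hgn := hxF n g (Finset.mem_image_of_mem _ (Finset.mem_range.2 (by omega)))
    have hsum : |∑ m ∈ Finset.range (N n), f (x n m) - ∑ m ∈ Finset.range (N n), g (x n m)| ≤
        N n * (ε / 3) := by
      rw [← Finset.sum_sub_distrib]
      refine (Finset.abs_sum_le_sum_abs _ _).trans ?_
      exact (Finset.sum_le_card_nsmul _ _ (ε / 3) fun m _ => hfg _).trans_eq (by simp)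
    have hintegral : |∫ y, g y ∂ν - ∫ y, f y ∂ν| ≤ ε / 3 := by
      rw [← integral_sub g.continuous.integrable_of_isFiniteMeasure hf.integrable_of_isFiniteMeasure]
      have := norm_integral_le_of_norm_le_const (μ := ν) (f := fun y => g y - f y)
        (C := ε / 3) (ae_of_all _ fun y => by
          rw [Real.norm_eq_abs, abs_sub_comm]
          exact hfg y)
      simpa using this
    rw [Finset.sum_image (hinj n), Real.dist_eq]
    have hmul : |∑ m ∈ Finset.range (N n), f (x n m) - N n * ∫ y, f y ∂ν| < N n * ε := by
      have hlast : |N n * ∫ y, g y ∂ν - N n * ∫ y, f y ∂ν| ≤ N n * (ε / 3) := by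
        rw [← mul_sub, abs_mul, abs_of_pos (hN0 n)]
        gcongr
      have hmid := hgn.trans_lt (mul_lt_mul_of_pos_right hsmall (hN0 n))
      rw [abs_lt] at hmid ⊢
      rw [abs_le] at hsum hlast
      constructor <;> linarith [hmid.1, hmid.2, hsum.1, hsum.2, hlast.1, hlast.2]
    refine lt_of_mul_lt_mul_left ?_ (hN0 n).le
    calc _ = |∑ m ∈ Finset.range (N n), f (x n m) - N n * ∫ y, f y ∂ν| := by
          have := (hN0 n).ne'
          rw [← abs_of_pos (hN0 n), ← abs_mul, abs_of_pos (hN0 n)]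
          congr 1
          field_simp
      _ < _ := hmul
  · simp only [hcard]
    refine tendsto_of_tendsto_of_tendsto_of_le_of_le' tendsto_const_nhds
      (tendsto_one_div_add_atTop_nhds_zero_nat (𝕜 := ℝ))
      (Eventually.of_forall fun n => by positivity) ?_
    obtain ⟨n₀, hn₀⟩ := exists_nat_one_div_lt hε
    filter_upwards [eventually_ge_atTop n₀] with n hn
    have hsmall : 1 / ((n : ℝ) + 1) < ε := (Nat.one_div_le_one_div hn).trans_lt hn₀
    have hsub : (((Finset.range (N n)).image (x n)).filter
          fun y => ε < dist (T n y) (τ y)) ⊆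
        ((Finset.range (N n)).filter
          fun m => 1 / ((n : ℝ) + 1) < dist (x n ((m + 1) % N n)) (τ (x n m))).image (x n) := by
      intro y hy
      obtain ⟨hy, hdist⟩ := Finset.mem_filter.1 hy
      obtain ⟨m, hm, rfl⟩ := Finset.mem_image.1 hy
      rw [hT n m (Finset.mem_range.1 hm)] at hdist
      exact Finset.mem_image_of_mem _ (Finset.mem_filter.2 ⟨hm, hsmall.trans hdist⟩)
    have hle : ((((Finset.range (N n)).image (x n)).filter
        fun y => ε < dist (T n y) (τ y)).card : ℝ) ≤ 1 / ((n : ℝ) + 1) * N n :=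
      le_trans (by exact_mod_cast (Finset.card_le_card hsub).trans Finset.card_image_le) (hxτ n)
    rw [one_div_mul_eq_div, div_le_iff₀ (hN0 n)]
    exact hle
end

section
/- Let α be an irrational real number. Let (M_n) and (N_n) be sequences of positive natural numbers with gcd(N_n, M_n) = 1, M_n → ∞, and N_n/M_n → α. For each n let Y_n = {0, 1/M_n, 2/M_n, …, (M_n−1)/M_n} ⊆ [0,1) and let T_n : Y_n → Y_n be the map T_n(y) = y + N_n/M_n (mod 1). Then for every continuous function f : ℝ → ℝ that is 1-periodic, every sequence of natural numbers K_n → ∞, and every sequence of points y_n ∈ Y_n, lim_{n→∞} (1/K_n)·Σ_{j=0}^{K_n−1} f(T_nʲ(y_n)) = ∫_0^1 f(t) dt. -/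
open Filter Topology MeasureTheory

/-- The orbit average of length `K` starting at `x` of the rotation of the circle by `a`. -/
noncomputable def rotationAverage (a x : UnitAddCircle) (K : ℕ) (F : C(UnitAddCircle, ℂ)) : ℂ :=
  (1 / (K : ℂ)) * ∑ j ∈ Finset.range K, F (x + j • a)

lemma rotationAverage_add (a x : UnitAddCircle) (K : ℕ) (F G : C(UnitAddCircle, ℂ)) :
    rotationAverage a x K (F + G) = rotationAverage a x K F + rotationAverage a x K G := by
  simp [rotationAverage, Finset.sum_add_distrib, mul_add]

lemma rotationAverage_smul (a x : UnitAddCircle) (K : ℕ) (c : ℂ) (F : C(UnitAddCircle, ℂ)) :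
    rotationAverage a x K (c • F) = c * rotationAverage a x K F := by
  simp only [rotationAverage, ContinuousMap.smul_apply, smul_eq_mul, ← Finset.mul_sum]
  ring

lemma norm_rotationAverage_le (a x : UnitAddCircle) (K : ℕ) (F : C(UnitAddCircle, ℂ)) :
    ‖rotationAverage a x K F‖ ≤ ‖F‖ := by
  rcases Nat.eq_zero_or_pos K with rfl | hK
  · simp [rotationAverage]
  have hsum : ‖∑ j ∈ Finset.range K, F (x + j • a)‖ ≤ K * ‖F‖ := by
    simpa using norm_sum_le_of_le (Finset.range K) fun j _ => F.norm_coe_le_norm (x + j • a)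
  have hK' : (0 : ℝ) < K := by exact_mod_cast hK
  rw [rotationAverage, norm_mul, norm_div, norm_one, Complex.norm_natCast, one_div,
    inv_mul_le_iff₀ hK']
  exact hsum

lemma fourier_add_nsmul (m : ℤ) (x a : UnitAddCircle) (j : ℕ) :
    fourier m (x + j • a) = fourier m x * (fourier m a : ℂ) ^ j := by
  simp only [fourier_apply, smul_add, AddCircle.toCircle_add, smul_comm m j a,
    AddCircle.toCircle_nsmul, Circle.coe_mul, Circle.coe_pow]

lemma norm_rotationAverage_fourier_le (m : ℤ) (a x : UnitAddCircle) (K : ℕ)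
    (ha : (fourier m a : ℂ) ≠ 1) :
    ‖rotationAverage a x K (fourier m)‖ ≤ 1 / (K : ℝ) * (2 / ‖(fourier m a : ℂ) - 1‖) := by
  have hnorm (y : UnitAddCircle) : ‖(fourier m y : ℂ)‖ = 1 := by
    rw [fourier_apply, Circle.norm_coe]
  simp only [rotationAverage, fourier_add_nsmul, ← Finset.mul_sum]
  rw [geom_sum_eq ha, norm_mul, norm_mul, hnorm, one_mul, norm_div, norm_div, norm_one,
    Complex.norm_natCast]
  gcongr
  calc ‖(fourier m a : ℂ) ^ K - 1‖ ≤ ‖(fourier m a : ℂ) ^ K‖ + ‖(1 : ℂ)‖ := norm_sub_le _ _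
    _ = 2 := by rw [norm_pow, hnorm]; norm_num

lemma fourier_coe_ne_one_of_irrational {α : ℝ} (hα : Irrational α) {m : ℤ} (hm : m ≠ 0) :
    (fourier m (α : UnitAddCircle) : ℂ) ≠ 1 := by
  rw [fourier_coe_apply, Ne, Complex.exp_eq_one_iff]
  rintro ⟨n, hn⟩
  have h2 : (2 * Real.pi * Complex.I : ℂ) ≠ 0 := Complex.two_pi_I_ne_zero
  have h : (m : ℂ) * α = n := by
    apply mul_left_cancel₀ h2
    rw [mul_comm _ (n : ℂ), ← hn]
    simp
    ring
  have h' : (m : ℝ) * α = n := by exact_mod_cast h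
  exact (hα.intCast_mul hm).ne_int n h'

lemma integral_fourier_eq_zero {m : ℤ} (hm : m ≠ 0) :
    ∫ t : UnitAddCircle, (fourier m t : ℂ) = 0 := by
  have h := congrFun (fourierCoeff_fourier (T := 1) m) 0
  rw [Pi.single_eq_of_ne hm.symm] at h
  simpa [fourierCoeff, AddCircle.integral_haarAddCircle] using h

lemma measureReal_univ_unitAddCircle :
    (volume : Measure UnitAddCircle).real Set.univ = 1 := by
  simp [Measure.real]

lemma tendsto_rotationAverage_fourier {α : ℝ} (hα : Irrational α)
    {a : ℕ → UnitAddCircle} (ha : Tendsto a atTop (𝓝 (α : UnitAddCircle)))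
    (x : ℕ → UnitAddCircle) {K : ℕ → ℕ} (hK : Tendsto K atTop atTop) (m : ℤ) :
    Tendsto (fun n => rotationAverage (a n) (x n) (K n) (fourier m)) atTop
      (𝓝 (∫ t : UnitAddCircle, (fourier m t : ℂ))) := by
  rcases eq_or_ne m 0 with rfl | hm
  · refine tendsto_const_nhds.congr' ?_
    filter_upwards [hK.eventually_gt_atTop 0] with n hn
    have : (K n : ℂ) ≠ 0 := by exact_mod_cast hn.ne'
    simp [rotationAverage, this, measureReal_univ_unitAddCircle]
  have hz : Tendsto (fun n => (fourier m (a n) : ℂ)) atTop (𝓝 (fourier m (α : UnitAddCircle))) :=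
    ((fourier m).continuous.tendsto _).comp ha
  have hne := fourier_coe_ne_one_of_irrational hα hm
  rw [integral_fourier_eq_zero hm]
  have hbound : Tendsto (fun n => 1 / (K n : ℝ) * (2 / ‖(fourier m (a n) : ℂ) - 1‖)) atTop
      (𝓝 0) := by
    have hone := (tendsto_one_div_atTop_nhds_zero_nat (𝕜 := ℝ)).comp hK
    have htwo := (tendsto_const_nhds (x := (2 : ℝ))).div (hz.sub_const 1).norm
      (norm_ne_zero_iff.mpr (sub_ne_zero.mpr hne))
    simpa using hone.mul htwo
  refine squeeze_zero_norm' ?_ hbound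
  filter_upwards [hz.eventually_ne hne] with n hn
  exact norm_rotationAverage_fourier_le m (a n) (x n) (K n) hn

lemma integrable_continuousMap_unitAddCircle (F : C(UnitAddCircle, ℂ)) :
    Integrable (fun t : UnitAddCircle => F t) :=
  F.continuous.integrable_of_hasCompactSupport (HasCompactSupport.of_compactSpace _)

/-- Orbit averages of rotations by angles converging to an irrational angle converge to the
integral, uniformly in the starting point. -/
lemma tendsto_rotationAverage {α : ℝ} (hα : Irrational α)
    {a : ℕ → UnitAddCircle} (ha : Tendsto a atTop (𝓝 (α : UnitAddCircle)))
    (x : ℕ → UnitAddCircle) {K : ℕ → ℕ} (hK : Tendsto K atTop atTop) (F : C(UnitAddCircle, ℂ)) :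
    Tendsto (fun n => rotationAverage (a n) (x n) (K n) F) atTop
      (𝓝 (∫ t : UnitAddCircle, F t)) := by
  have hspan : ∀ G ∈ Submodule.span ℂ (Set.range (fourier (T := 1))),
      Tendsto (fun n => rotationAverage (a n) (x n) (K n) G) atTop
        (𝓝 (∫ t : UnitAddCircle, G t)) := by
    intro G hG
    induction hG using Submodule.span_induction with
    | mem G hG =>
      obtain ⟨m, rfl⟩ := hG
      exact tendsto_rotationAverage_fourier hα ha x hK m
    | zero => simp [rotationAverage]
    | add G H _ _ hG hH =>
      simp only [rotationAverage_add, ContinuousMap.add_apply]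
      rw [integral_add (integrable_continuousMap_unitAddCircle G)
        (integrable_continuousMap_unitAddCircle H)]
      exact hG.add hH
    | smul c G _ hG =>
      simp only [rotationAverage_smul, ContinuousMap.smul_apply, smul_eq_mul, integral_const_mul]
      exact hG.const_mul c
  rw [Metric.tendsto_nhds]
  intro ε hε
  have hF : F ∈ closure (Submodule.span ℂ (Set.range (fourier (T := 1))) :
      Set C(UnitAddCircle, ℂ)) := by
    rw [← Submodule.topologicalClosure_coe, span_fourier_closure_eq_top]
    trivial
  obtain ⟨G, hG, hFG⟩ := Metric.mem_closure_iff.mp hF (ε / 3) (by positivity)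
  rw [dist_eq_norm] at hFG
  filter_upwards [Metric.tendsto_nhds.mp (hspan G hG) (ε / 3) (by positivity)] with n hn
  have havg : dist (rotationAverage (a n) (x n) (K n) F)
      (rotationAverage (a n) (x n) (K n) G) ≤ ‖F - G‖ := by
    have h := rotationAverage_add (a n) (x n) (K n) (F - G) G
    rw [sub_add_cancel] at h
    rw [dist_eq_norm, h, add_sub_cancel_right]
    exact norm_rotationAverage_le _ _ _ _
  have hint : dist (∫ t : UnitAddCircle, G t) (∫ t : UnitAddCircle, F t) ≤ ‖F - G‖ := by
    rw [dist_comm, dist_eq_norm, ← integral_sub (integrable_continuousMap_unitAddCircle F)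
      (integrable_continuousMap_unitAddCircle G)]
    simpa [measureReal_univ_unitAddCircle] using norm_integral_le_of_norm_le_const
      (μ := (volume : Measure UnitAddCircle)) (Eventually.of_forall fun t => (F - G).norm_coe_le_norm t)
  linarith [dist_triangle4 (rotationAverage (a n) (x n) (K n) F)
    (rotationAverage (a n) (x n) (K n) G) (∫ t : UnitAddCircle, G t) (∫ t : UnitAddCircle, F t)]

lemma coe_iterate_fract_add (b y : ℝ) (j : ℕ) :
    (((fun y => Int.fract (y + b))^[j] y : ℝ) : UnitAddCircle) = y + j • (b : UnitAddCircle) := by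
  induction j with
  | zero => simp
  | succ j ih =>
    rw [Function.iterate_succ_apply', AddCircle.coe_fract, AddCircle.coe_add, ih, succ_nsmul,
      add_assoc]

/-- Finite approximations of an irrational rotation: let `α` be irrational and let
`M n → ∞`, `N n` be positive naturals with `gcd (N n) (M n) = 1` and `N n / M n → α`.
On the grid `{k / M n : 0 ≤ k < M n} ⊆ [0,1)` consider the map
`T n y = y + N n / M n (mod 1)`. Then for every continuous `1`-periodic `f : ℝ → ℝ`,
every sequence `K n → ∞`, and every sequence of grid points `k n / M n` (with
`k n < M n`), the ergodic averages converge to `∫₀¹ f`. -/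
theorem irrational_rotation_finite_approximation
    (α : ℝ) (hα : Irrational α)
    (M N : ℕ → ℕ) (hMpos : ∀ n, 1 ≤ M n) (hNpos : ∀ n, 1 ≤ N n)
    (hgcd : ∀ n, Nat.gcd (N n) (M n) = 1)
    (hMtop : Tendsto M atTop atTop)
    (hNM : Tendsto (fun n => (N n : ℝ) / (M n : ℝ)) atTop (𝓝 α))
    (f : ℝ → ℝ) (hf : Continuous f) (hper : ∀ t : ℝ, f (t + 1) = f t)
    (K : ℕ → ℕ) (hK : Tendsto K atTop atTop)
    (k : ℕ → ℕ) (hk : ∀ n, k n < M n) :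
    Tendsto (fun n => (1 / (K n : ℝ)) * ∑ j ∈ Finset.range (K n),
        f ((fun y => Int.fract (y + (N n : ℝ) / (M n : ℝ)))^[j] ((k n : ℝ) / (M n : ℝ))))
      atTop (𝓝 (∫ t in (0:ℝ)..1, f t)) := by
  have hper' : Function.Periodic (fun t => (f t : ℂ)) 1 := fun t => by simp only [hper]
  let F : C(UnitAddCircle, ℂ) :=
    ⟨hper'.lift, continuous_coinduced_dom.mpr (Complex.continuous_ofReal.comp hf)⟩
  have hF (t : ℝ) : F (t : UnitAddCircle) = f t := hper'.lift_coe t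
  have hcircle : Tendsto (fun n => (((N n : ℝ) / (M n : ℝ) : ℝ) : UnitAddCircle)) atTop
      (𝓝 (α : UnitAddCircle)) :=
    ((AddCircle.continuous_mk' 1).tendsto α).comp hNM
  have h := tendsto_rotationAverage hα hcircle
    (fun n => (((k n : ℝ) / (M n : ℝ) : ℝ) : UnitAddCircle)) hK F
  have hint : ∫ t : UnitAddCircle, F t = ((∫ t in (0:ℝ)..1, f t : ℝ) : ℂ) := by
    rw [← UnitAddCircle.intervalIntegral_preimage 0, zero_add, ← intervalIntegral.integral_ofReal]
    simp only [hF]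
  rw [hint] at h
  have hre := (Complex.continuous_re.tendsto _).comp h
  rw [Complex.ofReal_re] at hre
  refine hre.congr fun n => ?_
  simp only [Function.comp_apply, rotationAverage, ← coe_iterate_fract_add, hF]
  rw [← Complex.ofReal_re (1 / (K n : ℝ) * _)]
  push_cast
  rfl
end

section
/- For M ≥ 1 let Y_M = {0, 1, …, M−1}, let T_M(k) = k + 1 (mod M), and let F_M(k) = k/M. For a ∈ (0,1] define ψ_a : [0,1] → ℝ by ψ_a(t) = t + a/2 for 0 ≤ t ≤ 1−a, and ψ_a(t) = t + a/2 − 1 + (1−t)/a for 1−a < t ≤ 1. Then for all sequences M_n → ∞, K_n ≥ 1, and k_n with 0 ≤ k_n < M_n, such that K_n/M_n → a ∈ (0,1] and k_n/M_n → t ∈ [0,1], one has lim_{n→∞} (1/K_n)·Σ_{j=0}^{K_n−1} ((k_n + j) mod M_n)/M_n = ψ_a(t). -/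
open Filter Topology

/-- The limit profile `ψ_a(t)` of ergodic averages for the cyclic shift and `F(k) = k/M`:
`ψ_a(t) = t + a/2` for `0 ≤ t ≤ 1 − a` and `ψ_a(t) = t + a/2 − 1 + (1−t)/a` for
`1 − a < t ≤ 1`. -/
noncomputable def psi (a t : ℝ) : ℝ :=
  if t ≤ 1 - a then t + a / 2 else t + a / 2 - 1 + (1 - t) / a

/-- The sum of the residues `i % M` over `i < N`, as long as `N ≤ 3 * M`. -/
lemma sum_range_mod_eq (M N : ℕ) (hN : N ≤ 3 * M) :
    ∑ i ∈ Finset.range N, ((i % M : ℕ) : ℝ) =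
      (N : ℝ) * (N - 1) / 2 - M * max ((N : ℝ) - M) 0 - M * max ((N : ℝ) - 2 * M) 0 := by
  induction N with
  | zero =>
    have hM : (0 : ℝ) ≤ M := M.cast_nonneg
    simp [hM]
  | succ N ih =>
    rw [Finset.sum_range_succ, ih (by lia)]
    push_cast
    rcases lt_or_ge N M with h1 | h1
    · have h1' : (N : ℝ) + 1 ≤ M := by exact_mod_cast h1
      have hM : (0 : ℝ) ≤ M := M.cast_nonneg
      rw [Nat.mod_eq_of_lt h1, max_eq_right (by linarith), max_eq_right (by linarith),
        max_eq_right (by linarith), max_eq_right (by linarith)]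
      ring
    have h1' : (M : ℝ) ≤ N := by exact_mod_cast h1
    rcases lt_or_ge N (2 * M) with h2 | h2
    · have h2' : (N : ℝ) + 1 ≤ 2 * M := by exact_mod_cast h2
      rw [Nat.mod_eq_sub_mod h1, Nat.mod_eq_of_lt (by lia), Nat.cast_sub h1,
        max_eq_left (by linarith), max_eq_right (by linarith),
        max_eq_left (by linarith), max_eq_right (by linarith)]
      ring
    · have h2' : 2 * (M : ℝ) ≤ N := by exact_mod_cast h2
      have hmod : N % M = N - 2 * M := by
        rw [Nat.mod_eq_sub_mod h1, Nat.mod_eq_sub_mod (by lia), Nat.mod_eq_of_lt (by lia)]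
        lia
      rw [hmod, Nat.cast_sub h2, max_eq_left (by linarith), max_eq_left (by linarith),
        max_eq_left (by linarith), max_eq_left (by linarith)]
      push_cast
      ring

/-- The limit of `M⁻² * ∑ i < N, i % M` as `N / M → x` with `0 ≤ x < 3`. -/
noncomputable def modPrimitive (x : ℝ) : ℝ :=
  x ^ 2 / 2 - max (x - 1) 0 - max (x - 2) 0

lemma continuous_modPrimitive : Continuous modPrimitive := by
  unfold modPrimitive
  fun_prop

lemma sum_range_mod_div_sq (M N : ℕ) (hM : 0 < M) (hN : N ≤ 3 * M) :
    (∑ i ∈ Finset.range N, ((i % M : ℕ) : ℝ)) / (M : ℝ) ^ 2 =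
      modPrimitive ((N : ℝ) / M) - (N : ℝ) / M / (2 * M) := by
  have hM' : (0 : ℝ) < M := by exact_mod_cast hM
  have hmax (c : ℝ) : max ((N : ℝ) - c * M) 0 = M * max ((N : ℝ) / M - c) 0 := by
    rw [mul_max_of_nonneg _ _ hM'.le, mul_zero]
    congr 1
    field_simp
  have h1 := hmax 1
  rw [one_mul] at h1
  rw [sum_range_mod_eq M N hN, h1, hmax 2, modPrimitive]
  field_simp
  ring

lemma cyclic_average_eq (M K k : ℕ) (hM : 0 < M) (hK : 0 < K) (h : k + K ≤ 3 * M) :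
    (1 / (K : ℝ)) * ∑ j ∈ Finset.range K, (((k + j) % M : ℕ) : ℝ) / (M : ℝ) =
      (modPrimitive ((k : ℝ) / M + (K : ℝ) / M) - modPrimitive ((k : ℝ) / M)) / ((K : ℝ) / M)
        - 1 / (2 * (M : ℝ)) := by
  have hM' : (M : ℝ) ≠ 0 := by exact_mod_cast hM.ne'
  have hK' : (K : ℝ) ≠ 0 := by exact_mod_cast hK.ne'
  have hsum := Finset.sum_range_add (fun i => ((i % M : ℕ) : ℝ)) k K
  have hkK := sum_range_mod_div_sq M (k + K) hM h
  have hk := sum_range_mod_div_sq M k hM (by lia)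
  rw [hsum, add_div, hk, Nat.cast_add, add_div] at hkK
  have hdiff : modPrimitive ((k : ℝ) / M + (K : ℝ) / M) - modPrimitive ((k : ℝ) / M) =
      (∑ j ∈ Finset.range K, (((k + j) % M : ℕ) : ℝ)) / (M : ℝ) ^ 2
        + (K : ℝ) / M / (2 * M) := by
    linear_combination -hkK
  rw [hdiff, ← Finset.sum_div]
  field_simp
  ring

lemma psi_eq_modPrimitive (a t : ℝ) (ha0 : 0 < a) (ha1 : a ≤ 1) (ht1 : t ≤ 1) :
    psi a t = (modPrimitive (t + a) - modPrimitive t) / a := by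
  unfold psi modPrimitive
  rw [max_eq_right (show t - 1 ≤ 0 by linarith), max_eq_right (show t - 2 ≤ 0 by linarith),
    max_eq_right (show t + a - 2 ≤ 0 by linarith)]
  split_ifs with h
  · rw [max_eq_right (by linarith)]
    field_simp
    ring
  · rw [max_eq_left (by linarith)]
    field_simp
    ring

/-- For the cyclic shift `T(k) = k + 1 (mod M)` on `{0, …, M−1}` and `F(k) = k/M`: for
sequences `M n → ∞`, `K n ≥ 1`, `k n < M n` with `K n / M n → a ∈ (0,1]` and
`k n / M n → t ∈ [0,1]`, the ergodic averages
`(1/K n)·∑_{j<K n} ((k n + j) mod M n)/M n` converge to `ψ_a(t)`. -/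
theorem cyclic_shift_average_limit
    (M K k : ℕ → ℕ) (a t : ℝ)
    (hMtop : Tendsto M atTop atTop)
    (hK1 : ∀ n, 1 ≤ K n) (hk : ∀ n, k n < M n)
    (ha : Tendsto (fun n => (K n : ℝ) / (M n : ℝ)) atTop (𝓝 a))
    (ha0 : 0 < a) (ha1 : a ≤ 1)
    (ht : Tendsto (fun n => (k n : ℝ) / (M n : ℝ)) atTop (𝓝 t))
    (ht0 : 0 ≤ t) (ht1 : t ≤ 1) :
    Tendsto (fun n => (1 / (K n : ℝ)) * ∑ j ∈ Finset.range (K n),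
        (((k n + j) % M n : ℕ) : ℝ) / (M n : ℝ))
      atTop (𝓝 (psi a t)) := by
  have hlim : Tendsto (fun n =>
      (modPrimitive ((k n : ℝ) / M n + (K n : ℝ) / M n) - modPrimitive ((k n : ℝ) / M n))
        / ((K n : ℝ) / M n) - 1 / (2 * (M n : ℝ))) atTop (𝓝 (psi a t)) := by
    have hM : Tendsto (fun n => 1 / (2 * (M n : ℝ))) atTop (𝓝 0) :=
      tendsto_const_nhds.div_atTop
        ((tendsto_natCast_atTop_atTop.comp hMtop).const_mul_atTop two_pos)
    have hsum := (continuous_modPrimitive.tendsto (t + a)).comp (ht.add ha)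
    have hstart := (continuous_modPrimitive.tendsto t).comp ht
    rw [psi_eq_modPrimitive a t ha0 ha1 ht1]
    simpa using ((hsum.sub hstart).div ha ha0.ne').sub hM
  refine hlim.congr' ?_
  filter_upwards [(ht.add ha).eventually_lt_const (show t + a < 3 by linarith)] with n hn
  have hM : 0 < M n := (Nat.zero_le _).trans_lt (hk n)
  have hM' : (0 : ℝ) < M n := by exact_mod_cast hM
  rw [← add_div, div_lt_iff₀ hM'] at hn
  exact (cyclic_average_eq (M n) (K n) (k n) hM (hK1 n) (by exact_mod_cast hn.le)).symm
end

section
/- Let (X, ρ) be a compact metric space and τ : X → X a continuous, uniquely ergodic, minimal transformation (τ has exactly one invariant Borel probability measure ν, and every τ-orbit is dense in X). Let Y_n ⊆ X be finite nonempty subsets and T_n : Y_n → Y_n permutations such that max_{x ∈ X} dist(x, Y_n) → 0 and max_{y ∈ Y_n} ρ(T_n(y), τ(y)) → 0 as n → ∞. Then for every continuous function f : X → ℝ, every sequence of natural numbers K_n → ∞, and every sequence of points y_n ∈ Y_n, lim_{n→∞} (1/K_n)·Σ_{j=0}^{K_n−1} f(T_nʲ(y_n)) = ∫_X f dν. -/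
open MeasureTheory Filter Topology

/-- Birkhoff averages of positive length are integrals against the empirical measure of the
orbit segment. -/
theorem exists_probabilityMeasure_integral_eq_birkhoffAverage
    {X : Type*} [TopologicalSpace X] [MeasurableSpace X] [OpensMeasurableSpace X]
    (T : X → X) (x : X) {k : ℕ} (hk : k ≠ 0) :
    ∃ μ : ProbabilityMeasure X, ∀ g : X → ℝ, Continuous g →
      ∫ z, g z ∂(μ : Measure X) = birkhoffAverage ℝ T g k x := by
  refine ⟨⟨(k : ENNReal)⁻¹ • ∑ j ∈ Finset.range k, Measure.dirac (T^[j] x), ⟨?_⟩⟩, fun g hg => ?_⟩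
  · simp [ENNReal.inv_mul_cancel, hk]
  · have hint : ∀ j ∈ Finset.range k, Integrable g (Measure.dirac (T^[j] x)) := fun j _ =>
      integrable_dirac' hg.stronglyMeasurable (by simp)
    simp [integral_finsetSum_measure hint, birkhoffAverage, birkhoffSum,
      integral_dirac' _ _ hg.stronglyMeasurable]

/-- If `T n` is uniformly close to `τ` on an invariant set `Y n`, then along orbits in `Y n` the
Birkhoff averages of `g ∘ τ` and of `g` are asymptotically equal. -/
theorem tendsto_birkhoffAverage_comp_sub_birkhoffAverage
    {X : Type*} [MetricSpace X] [CompactSpace X] {τ : X → X}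
    {Y : ℕ → Set X} {T : ℕ → X → X} (hT : ∀ n, Set.MapsTo (T n) (Y n) (Y n))
    (happrox : ∀ ε > (0 : ℝ), ∃ n₀, ∀ n ≥ n₀, ∀ y ∈ Y n, dist (T n y) (τ y) < ε)
    {K : ℕ → ℕ} (hK : Tendsto K atTop atTop) {y : ℕ → X} (hy : ∀ n, y n ∈ Y n)
    {g : X → ℝ} (hg : Continuous g) :
    Tendsto (fun n => birkhoffAverage ℝ (T n) (g ∘ τ) (K n) (y n) -
      birkhoffAverage ℝ (T n) g (K n) (y n)) atTop (𝓝 0) := by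
  have hshift : Tendsto (fun n => birkhoffAverage ℝ (T n) g (K n) (T n (y n)) -
      birkhoffAverage ℝ (T n) g (K n) (y n)) atTop (𝓝 0) := by
    obtain ⟨C, hC⟩ := Metric.isBounded_iff.1 (isCompact_range hg).isBounded
    refine squeeze_zero_norm (fun n => ?_)
      ((tendsto_const_nhds (x := C)).div_atTop (tendsto_natCast_atTop_atTop.comp hK))
    rw [← dist_eq_norm, dist_birkhoffAverage_apply_birkhoffAverage, Function.comp_apply]
    gcongr
    exact hC ⟨_, rfl⟩ ⟨_, rfl⟩
  have hclose : Tendsto (fun n => birkhoffAverage ℝ (T n) (g ∘ τ) (K n) (y n) -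
      birkhoffAverage ℝ (T n) g (K n) (T n (y n))) atTop (𝓝 0) := by
    rw [Metric.tendsto_atTop]
    intro ε hε
    obtain ⟨δ, hδ, hgδ⟩ := Metric.uniformContinuous_iff.1
      (CompactSpace.uniformContinuous_of_continuous hg) (ε / 2) (half_pos hε)
    obtain ⟨n₀, hn₀⟩ := happrox δ hδ
    refine ⟨n₀, fun n hn => lt_of_le_of_lt ?_ (half_lt_self hε)⟩
    have hterm : ∀ j, dist (g (τ ((T n)^[j] (y n)))) (g ((T n)^[j] (T n (y n)))) ≤ ε / 2 := by
      intro j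
      rw [← Function.iterate_succ_apply, Function.iterate_succ_apply', dist_comm]
      exact (hgδ (hn₀ n hn _ ((hT n).iterate j (hy n)))).le
    rw [dist_zero_right, ← dist_eq_norm]
    simp only [birkhoffAverage, birkhoffSum, dist_smul₀, Function.comp_apply, norm_inv,
      RCLike.norm_natCast]
    calc (K n : ℝ)⁻¹ * dist (∑ j ∈ Finset.range (K n), g (τ ((T n)^[j] (y n))))
          (∑ j ∈ Finset.range (K n), g ((T n)^[j] (T n (y n))))
        ≤ (K n : ℝ)⁻¹ * (K n * (ε / 2)) := by
          gcongr
          simpa using dist_sum_sum_le_of_le (Finset.range (K n)) fun j _ => hterm j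
      _ ≤ ε / 2 := by
          rw [← mul_assoc]
          exact mul_le_of_le_one_left (half_pos hε).le inv_mul_le_one
  simpa using hclose.add hshift

/-- For a uniquely ergodic, minimal continuous transformation `τ` of a compact metric
space `X` with unique invariant Borel probability measure `ν`, and finite approximations
`(Y n, T n)` with `max_{x ∈ X} dist(x, Y n) → 0` and `max_{y ∈ Y n} ρ(T n y, τ y) → 0`,
the ergodic averages of any continuous `f` along the approximations converge to
`∫ f dν`, for any lengths `K n → ∞` and any starting points `y n ∈ Y n`. -/
theorem uniquely_ergodic_finite_approximation
    {X : Type*} [MetricSpace X] [CompactSpace X] [MeasurableSpace X] [BorelSpace X]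
    (τ : X → X) (hτc : Continuous τ)
    (ν : Measure X) [IsProbabilityMeasure ν] (hν : MeasurePreserving τ ν ν)
    (huniq : ∀ μ : Measure X, IsProbabilityMeasure μ → MeasurePreserving τ μ μ → μ = ν)
    (hmin : ∀ x : X, Dense (Set.range fun j : ℕ => τ^[j] x))
    (Y : ℕ → Finset X) (hY : ∀ n, (Y n).Nonempty)
    (T : ℕ → X → X) (hT : ∀ n, Set.BijOn (T n) ↑(Y n) ↑(Y n))
    (hdense : ∀ ε > (0 : ℝ), ∃ n₀, ∀ n ≥ n₀, ∀ x : X, Metric.infDist x ↑(Y n) < ε)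
    (happrox : ∀ ε > (0 : ℝ), ∃ n₀, ∀ n ≥ n₀, ∀ y ∈ Y n, dist (T n y) (τ y) < ε)
    (f : X → ℝ) (hf : Continuous f)
    (K : ℕ → ℕ) (hK : Tendsto K atTop atTop)
    (y : ℕ → X) (hy : ∀ n, y n ∈ Y n) :
    Tendsto (fun n => (1 / (K n : ℝ)) * ∑ j ∈ Finset.range (K n), f ((T n)^[j] (y n)))
      atTop (𝓝 (∫ x, f x ∂ν)) := by
  have hmaps : ∀ n, Set.MapsTo (T n) (Y n : Set X) (Y n : Set X) := fun n => (hT n).mapsTo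
  have hempirical : ∀ n, ∃ μ : ProbabilityMeasure X, K n ≠ 0 → ∀ g : X → ℝ, Continuous g →
      ∫ z, g z ∂(μ : Measure X) = birkhoffAverage ℝ (T n) g (K n) (y n) := by
    intro n
    by_cases hn : K n = 0
    · exact ⟨⟨ν, inferInstance⟩, fun h => absurd hn h⟩
    · obtain ⟨μ, hμ⟩ := exists_probabilityMeasure_integral_eq_birkhoffAverage (T n) (y n) hn
      exact ⟨μ, fun _ => hμ⟩
  choose μ hμ using hempirical
  suffices h : Tendsto (fun n => birkhoffAverage ℝ (T n) f (K n) (y n)) atTop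
      (𝓝 (∫ x, f x ∂ν)) by
    simpa [birkhoffAverage, birkhoffSum] using h
  rw [tendsto_iff_ultrafilter]
  intro U hU
  obtain ⟨m, -, hm⟩ := isCompact_univ.ultrafilter_le_nhds (U.map μ) (by simp)
  have hlim : ∀ g : X → ℝ, Continuous g →
      Tendsto (fun n => birkhoffAverage ℝ (T n) g (K n) (y n)) U
        (𝓝 (∫ x, g x ∂(m : Measure X))) := by
    intro g hg
    refine (ProbabilityMeasure.tendsto_iff_forall_integral_tendsto.1 hm
      (BoundedContinuousFunction.mkOfCompact ⟨g, hg⟩)).congr' ?_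
    filter_upwards [hU (hK.eventually_ne_atTop 0)] with n hn using hμ n hn g hg
  have hinv : (m : Measure X).map τ = m := by
    have := Measure.isProbabilityMeasure_map (μ := (m : Measure X)) hτc.aemeasurable
    refine ext_of_forall_integral_eq_of_IsFiniteMeasure fun g => ?_
    rw [integral_map hτc.aemeasurable g.continuous.aestronglyMeasurable, ← sub_eq_zero]
    exact tendsto_nhds_unique
      ((hlim _ (g.continuous.comp hτc)).sub (hlim _ g.continuous))
      ((tendsto_birkhoffAverage_comp_sub_birkhoffAverage hmaps happrox hK hy
        g.continuous).mono_left hU)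
  rw [← huniq m inferInstance ⟨hτc.measurable, hinv⟩]
  exact hlim f hf
end
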